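/- arXiv:2604.05304 — 7 statements merged into one kernel-verified Lean document; each statement's English description precedes it below -/
import Mathlib

section
/- Let n be a positive integer and p a prime such that p^p divides n, and let r with 0 ≤ r < p be the remainder when τ(n) is divided by p. If τ(n) > r(p+1), then n is not matchable. -/
/-!
Write `n = p ^ a * m` with `p ∤ m`, so that `a ≥ p` and `τ(n) = (a + 1) * τ(m) ≥ (p + 1) * τ(m)`.
In a matching, each of the `⌊τ(n) / p⌋` multiples of `p` in `{1, ..., τ(n)}` is the image of a
divisor of `n` prime to `p`, that is, of a divisor of `m`. Hence `⌊τ(n) / p⌋ ≤ τ(m)`. With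
`τ(n) = p * q + r` this gives `(p + 1) * q ≤ p * q + r`, so `q ≤ r` and `τ(n) ≤ r * (p + 1)`.
-/

/-- A positive integer `n` is matchable if there is a bijection `ψ` from the set of
divisors of `n` to `{1, 2, ..., τ(n)}` with `gcd(d, ψ(d)) = 1` for every divisor `d`. -/
def Matchable (n : ℕ) : Prop :=
  ∃ ψ : ℕ → ℕ, Set.BijOn ψ ↑n.divisors ↑(Finset.Icc 1 n.divisors.card) ∧
    ∀ d ∈ n.divisors, Nat.gcd d (ψ d) = 1

theorem stmt_0 (n p r : ℕ) (hn : 0 < n) (hp : p.Prime) (hdvd : p ^ p ∣ n)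
    (hr : r = n.divisors.card % p) (h : n.divisors.card > r * (p + 1)) :
    ¬ Matchable n := by
  rintro ⟨ψ, hψ, hcop⟩
  obtain ⟨a, m, hpm, hnm⟩ := Nat.exists_eq_pow_mul_and_not_dvd hn.ne' p hp.ne_one
  have hm0 : m ≠ 0 := by rintro rfl; simp at hpm
  have hcpm : Nat.Coprime p m := (Nat.Prime.coprime_iff_not_dvd hp).2 hpm
  have hpa : p ≤ a := by
    rw [hnm] at hdvd
    exact (Nat.pow_dvd_pow_iff_le_right hp.one_lt).1
      ((hcpm.pow_left p).dvd_of_dvd_mul_right hdvd)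
  have hτ : n.divisors.card = (a + 1) * m.divisors.card := by
    rw [hnm, (hcpm.pow_left a).card_divisors_mul, Nat.divisors_prime_pow hp]
    simp
  have hq : n.divisors.card / p ≤ m.divisors.card := by
    rw [← Nat.Ioc_filter_dvd_card_eq_div]
    refine (Finset.card_le_card (t := m.divisors.image ψ) ?_).trans Finset.card_image_le
    intro k hk
    simp only [Finset.mem_filter, Finset.mem_Ioc] at hk
    obtain ⟨d, hd, rfl⟩ := hψ.surjOn (Finset.mem_coe.2 (Finset.mem_Icc.2 hk.1))
    have hd' : d ∈ n.divisors := hd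
    have hdp : Nat.Coprime d p := Nat.Coprime.coprime_dvd_right hk.2 (hcop d hd')
    refine Finset.mem_image_of_mem ψ (Nat.mem_divisors.2 ⟨?_, hm0⟩)
    exact (hdp.pow_right a).dvd_of_dvd_mul_left (hnm ▸ Nat.dvd_of_mem_divisors hd')
  have hdiv := Nat.div_add_mod n.divisors.card p
  rw [← hr] at hdiv
  have h1 : (p + 1) * (n.divisors.card / p) ≤ n.divisors.card := by
    conv_rhs => rw [hτ]
    gcongr
  have h2 : n.divisors.card / p ≤ r := by linarith
  have h3 := Nat.mul_le_mul_left p h2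
  linarith
end

section
/- If p is a prime with p^p dividing the positive integer n, and τ(n) ≥ p², then n is not matchable. -/
/-- In a matching, the preimage of a multiple of `p` is prime to `p`, hence a divisor of `m`, which
bounds the number of multiples of `p` in `{1, ..., τ(p ^ a * m)}`. -/
lemma Matchable.div_le_card_divisors {a m p : ℕ} (hp : p.Prime) (hm : m ≠ 0)
    (h : Matchable (p ^ a * m)) :
    (p ^ a * m).divisors.card / p ≤ m.divisors.card := by
  obtain ⟨ψ, hψ, hco⟩ := h
  set t := (p ^ a * m).divisors.card
  have hcard : ((Finset.Ioc 0 t).filter (p ∣ ·)).card = t / p := Nat.Ioc_filter_dvd_card_eq_div t p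
  rw [← hcard]
  refine (Finset.card_le_card (t := m.divisors.image ψ) ?_).trans Finset.card_image_le
  intro k hk
  rw [Finset.mem_filter, Finset.mem_Ioc] at hk
  obtain ⟨⟨hk0, hkt⟩, hpk⟩ := hk
  obtain ⟨d, hd, rfl⟩ := hψ.surjOn (show k ∈ (↑(Finset.Icc 1 t) : Set ℕ) by
    rw [Finset.mem_coe, Finset.mem_Icc]; omega)
  have hd' : d ∈ (p ^ a * m).divisors := hd
  have hpd : ¬ p ∣ d := fun hpd => hp.one_lt.ne' <|
    Nat.dvd_one.mp (hco d hd' ▸ Nat.dvd_gcd hpd hpk)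
  refine Finset.mem_image_of_mem ψ (Nat.mem_divisors.mpr ⟨?_, hm⟩)
  exact (((hp.coprime_iff_not_dvd.mpr hpd).symm).pow_right a).dvd_of_dvd_mul_left
    (Nat.dvd_of_mem_divisors hd')

theorem stmt_1 (n p : ℕ) (hn : 0 < n) (hp : p.Prime) (hdvd : p ^ p ∣ n)
    (h : n.divisors.card ≥ p ^ 2) :
    ¬ Matchable n := by
  obtain ⟨a, m, hpm, rfl⟩ := Nat.exists_eq_pow_mul_and_not_dvd hn.ne' p hp.ne_one
  have hm : m ≠ 0 := by rintro rfl; exact hpm (dvd_zero p)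
  have hcop : (p ^ a).Coprime m := (hp.coprime_iff_not_dvd.mpr hpm).pow_left a
  have hpa : p ≤ a := by
    have hco : (p ^ p).Coprime m := (hp.coprime_iff_not_dvd.mpr hpm).pow_left p
    exact (Nat.pow_dvd_pow_iff_le_right hp.one_lt).mp (hco.dvd_of_dvd_mul_right hdvd)
  intro hM
  have hle := hM.div_le_card_divisors hp hm
  have hτ : (p ^ a * m).divisors.card = (a + 1) * m.divisors.card := by
    rw [hcop.card_divisors_mul, Nat.divisors_prime_pow hp]
    simp
  have hlt : (p ^ a * m).divisors.card < (m.divisors.card + 1) * p :=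
    (Nat.div_lt_iff_lt_mul hp.pos).mp (Nat.lt_succ_of_le hle)
  -- `τ(m) ≥ p` contradicts `hτ` with `hpa`; `τ(m) < p` contradicts `h`.
  rcases le_or_gt p m.divisors.card with hc | hc <;> nlinarith
end

section
/- The upper asymptotic density of the set of matchable positive integers is at most α, i.e., limsup_{x→∞} #{n ≤ x : n is matchable}/x ≤ α. -/
/-- `α = ∏_p (1 - p^{-p})`, the product over all primes `p`. -/
noncomputable def alphaConst : ℝ :=
  ∏' p : Nat.Primes, (1 - 1 / ((p : ℕ) : ℝ) ^ (p : ℕ))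

/-! ### Matchable integers divisible by `p ^ p` -/

theorem Matchable.card_divisors_lt {n p : ℕ} (hn : n ≠ 0) (hp : p.Prime) (hpn : p ^ p ∣ n)
    (hM : Matchable n) : n.divisors.card < p ^ 2 := by
  obtain ⟨ψ, hψ, hcop⟩ := hM
  obtain ⟨a, m, hpm, rfl⟩ := Nat.exists_eq_pow_mul_and_not_dvd hn p hp.ne_one
  have hcm : Nat.Coprime p m := (Nat.Prime.coprime_iff_not_dvd hp).2 hpm
  have ha : p ≤ a := by
    have : p ^ p ∣ p ^ a := (Nat.Coprime.pow_left p hcm).dvd_of_dvd_mul_right hpn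
    exact (Nat.pow_dvd_pow_iff_le_right hp.one_lt).1 this
  set t := (p ^ a * m).divisors.card with ht
  have ht' : t = (a + 1) * m.divisors.card := by
    rw [ht, Nat.Coprime.card_divisors_mul (Nat.Coprime.pow_left a hcm),
      Nat.divisors_prime_pow hp, Finset.card_map, Finset.card_range]
  have hm0 : m ≠ 0 := by rintro rfl; simp at hpm
  -- A multiple of `p` can only be the image of a divisor prime to `p`.
  have hsub : (Finset.Ioc 0 t).filter (fun k => p ∣ k) ⊆ m.divisors.image ψ := by
    intro k hk
    simp only [Finset.mem_filter, Finset.mem_Ioc] at hk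
    obtain ⟨d, hd, rfl⟩ := hψ.surjOn (show k ∈ (↑(Finset.Icc 1 t) : Set ℕ) by
      simp only [Finset.coe_Icc, Set.mem_Icc]; omega)
    have hd' := Finset.mem_coe.1 hd
    have hpd : ¬ p ∣ d := fun h => hp.one_lt.ne' (Nat.dvd_one.1 (by
      rw [← hcop d hd']; exact Nat.dvd_gcd h hk.2))
    refine Finset.mem_image_of_mem _ (Nat.mem_divisors.2 ⟨?_, hm0⟩)
    have hdp : Nat.Coprime d (p ^ a) :=
      (Nat.Coprime.pow_left a ((Nat.Prime.coprime_iff_not_dvd hp).2 hpd)).symm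
    exact hdp.dvd_of_dvd_mul_left (Nat.mem_divisors.1 hd').1
  have hq : t / p ≤ m.divisors.card := by
    rw [← Nat.Ioc_filter_dvd_card_eq_div]
    exact (Finset.card_le_card hsub).trans Finset.card_image_le
  have hle : (p + 1) * (t / p) ≤ t := by
    rw [ht'] at hq ⊢
    exact Nat.mul_le_mul (by omega) hq
  by_contra hlt
  push Not at hlt
  have hr := Nat.mod_lt t hp.pos
  have hdm := Nat.div_add_mod t p
  have hpq : p ≤ t / p := (Nat.le_div_iff_mul_le hp.pos).2 (by rw [← sq]; exact hlt)
  have : (p + 1) * (t / p) = p * (t / p) + t / p := by ring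
  omega

/-! ### A sieve by finitely many coprime moduli -/

/-- The number of `n ∈ {1, …, x}` divisible by no `a i`, `i ∈ S`. -/
def sieveCount {ι : Type*} (a : ι → ℕ) (S : Finset ι) (x : ℕ) : ℕ :=
  ((Finset.Ioc 0 x).filter (fun n => ∀ i ∈ S, ¬ a i ∣ n)).card

/-- Legendre's recursion. -/
theorem sieveCount_insert {ι : Type*} [DecidableEq ι] (a : ι → ℕ) (S : Finset ι) (j : ι)
    (hj : 0 < a j) (hcop : ∀ i ∈ S, Nat.Coprime (a i) (a j)) (x : ℕ) :
    sieveCount a (insert j S) x + sieveCount a S (x / a j) = sieveCount a S x := by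
  unfold sieveCount
  rw [← Finset.card_filter_add_card_filter_not (s := (Finset.Ioc 0 x).filter
    (fun n => ∀ i ∈ S, ¬ a i ∣ n)) (fun n => ¬ a j ∣ n)]
  congr 1
  · congr 1
    ext n
    simp only [Finset.mem_filter, Finset.forall_mem_insert]
    tauto
  · refine Finset.card_bij (fun m _ => a j * m) ?_ ?_ ?_
    · intro m hm
      simp only [Finset.mem_filter, Finset.mem_Ioc, not_not] at hm ⊢
      refine ⟨⟨⟨Nat.mul_pos hj hm.1.1, ?_⟩, ?_⟩, dvd_mul_right _ _⟩
      · rw [mul_comm]; exact (Nat.le_div_iff_mul_le hj).1 hm.1.2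
      · intro i hi h
        exact hm.2 i hi ((hcop i hi).dvd_of_dvd_mul_left h)
    · intro m _ m' _ h
      exact Nat.eq_of_mul_eq_mul_left hj h
    · intro n hn
      simp only [Finset.mem_filter, Finset.mem_Ioc, not_not] at hn
      obtain ⟨m, rfl⟩ := hn.2
      refine ⟨m, ?_, rfl⟩
      simp only [Finset.mem_filter, Finset.mem_Ioc]
      refine ⟨⟨Nat.pos_of_mul_pos_left hn.1.1.1, ?_⟩, fun i hi h => hn.1.2 i hi (h.mul_left _)⟩
      rw [Nat.le_div_iff_mul_le hj, mul_comm]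
      exact hn.1.1.2

theorem exists_sieve_bound {ι : Type*} (a : ι → ℕ) (ha : ∀ i, 0 < a i)
    (hcop : ∀ i j, i ≠ j → Nat.Coprime (a i) (a j)) (S : Finset ι) :
    ∃ C : ℝ, ∀ x : ℕ,
      |(sieveCount a S x : ℝ) - x * ∏ i ∈ S, (1 - 1 / (a i : ℝ))| ≤ C := by
  classical
  induction S using Finset.induction_on with
  | empty => exact ⟨0, fun x => by simp [sieveCount]⟩
  | insert j S hjS ih =>
    obtain ⟨C, hC⟩ := ih
    refine ⟨2 * C + |∏ i ∈ S, (1 - 1 / (a i : ℝ))|, fun x => ?_⟩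
    have hrec := sieveCount_insert a S j (ha j)
      (fun i hi => hcop i j (by rintro rfl; exact hjS hi)) x
    rw [Finset.prod_insert hjS]
    set c := ∏ i ∈ S, (1 - 1 / (a i : ℝ))
    have hrec' : (sieveCount a (insert j S) x : ℝ)
        = sieveCount a S x - sieveCount a S (x / a j) := by
      rw [← hrec]; push_cast; ring
    have h1 := hC x
    have h2 := hC (x / a j)
    have haj : (0 : ℝ) < a j := by exact_mod_cast ha j
    have hfl : |((x / a j : ℕ) : ℝ) - (x : ℝ) / a j| ≤ 1 := by
      have e1 : ((x / a j : ℕ) : ℝ) ≤ (x : ℝ) / a j := Nat.cast_div_le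
      have e2 : (x : ℝ) / a j < ((x / a j : ℕ) : ℝ) + 1 := by
        rw [div_lt_iff₀ haj]
        exact_mod_cast (Nat.lt_mul_of_div_lt (Nat.lt_succ_self (x / a j)) (ha j)).trans_eq rfl
      rw [abs_le]; constructor <;> linarith
    have h3 : |(((x / a j : ℕ) : ℝ) - (x : ℝ) / a j) * c| ≤ |c| := by
      rw [abs_mul]
      exact mul_le_of_le_one_left (abs_nonneg c) hfl
    have key : (sieveCount a (insert j S) x : ℝ) - x * ((1 - 1 / (a j : ℝ)) * c)
        = ((sieveCount a S x : ℝ) - x * c)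
          - ((sieveCount a S (x / a j) : ℝ) - ((x / a j : ℕ) : ℝ) * c)
          - (((x / a j : ℕ) : ℝ) - (x : ℝ) / a j) * c := by
      rw [hrec']; ring
    rw [key]
    rw [abs_le] at h1 h2 h3 ⊢
    constructor <;> linarith

/-! ### Integers with few divisors have density zero -/

/-- Mertens-type products over the primes outside a finite set become arbitrarily small, because
`∑ 1/p` diverges. -/
theorem exists_block (U : Finset Nat.Primes) {δ : ℝ} (hδ : 0 < δ) :
    ∃ T : Finset Nat.Primes, Disjoint U T ∧ ∏ p ∈ T, (1 - 1 / ((p : ℕ) : ℝ)) ≤ δ := by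
  classical
  have hns := Nat.Primes.not_summable_one_div
  obtain ⟨T, hT⟩ : ∃ T : Finset Nat.Primes,
      -Real.log δ + ∑ p ∈ U, 1 / ((p : ℕ) : ℝ) < ∑ p ∈ T, 1 / ((p : ℕ) : ℝ) := by
    by_contra h
    push Not at h
    exact hns (summable_of_sum_le (fun p => by positivity) h)
  refine ⟨T \ U, Finset.disjoint_sdiff, ?_⟩
  have hsum : -Real.log δ ≤ ∑ p ∈ T \ U, 1 / ((p : ℕ) : ℝ) := by
    have h1 := Finset.sum_inter_add_sum_sdiff T U (fun p : Nat.Primes => 1 / ((p : ℕ) : ℝ))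
    have h2 : ∑ p ∈ T ∩ U, 1 / ((p : ℕ) : ℝ) ≤ ∑ p ∈ U, 1 / ((p : ℕ) : ℝ) :=
      Finset.sum_le_sum_of_subset_of_nonneg Finset.inter_subset_right
        (fun p _ _ => by positivity)
    linarith
  calc ∏ p ∈ T \ U, (1 - 1 / ((p : ℕ) : ℝ))
      ≤ ∏ p ∈ T \ U, Real.exp (-(1 / ((p : ℕ) : ℝ))) := by
        refine Finset.prod_le_prod (fun p _ => ?_) (fun p _ => Real.one_sub_le_exp_neg _)
        have : (1 : ℝ) ≤ (p : ℕ) := by exact_mod_cast p.2.one_lt.le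
        rw [sub_nonneg, div_le_one (by linarith)]
        exact this
    _ = Real.exp (-∑ p ∈ T \ U, 1 / ((p : ℕ) : ℝ)) := by
        rw [← Real.exp_sum, Finset.sum_neg_distrib]
    _ ≤ Real.exp (Real.log δ) := Real.exp_le_exp.2 (by linarith)
    _ = δ := Real.exp_log hδ

/-- For some finite set `U` of primes, the integers with fewer than `k` prime divisors in `U` have
upper density at most `ε`. The set `U` is a union of `k` disjoint blocks, one of which
must be avoided by such an integer. -/
theorem exists_few_primes_bound (k : ℕ) : ∀ ε : ℝ, 0 < ε → ∃ U : Finset Nat.Primes, ∃ C : ℝ,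
    ∀ x : ℕ, (((Finset.Ioc 0 x).filter
      (fun n => (U.filter (fun p : Nat.Primes => (p : ℕ) ∣ n)).card < k)).card : ℝ) ≤ ε * x + C := by
  classical
  induction k with
  | zero => exact fun ε hε => ⟨∅, 0, fun x => by simp; positivity⟩
  | succ k ih =>
    intro ε hε
    obtain ⟨U, C, hU⟩ := ih (ε / 2) (half_pos hε)
    obtain ⟨T, hUT, hT⟩ := exists_block U (half_pos hε)
    obtain ⟨C', hC'⟩ := exists_sieve_bound (fun p : Nat.Primes => (p : ℕ)) (fun p => p.2.pos)
      (fun p q hpq => (Nat.coprime_primes p.2 q.2).2 (fun h => hpq (Subtype.ext h))) T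
    refine ⟨U ∪ T, C + C', fun x => ?_⟩
    have hsub : (Finset.Ioc 0 x).filter
          (fun n => ((U ∪ T).filter (fun p : Nat.Primes => (p : ℕ) ∣ n)).card < k + 1)
        ⊆ (Finset.Ioc 0 x).filter (fun n => (U.filter (fun p : Nat.Primes => (p : ℕ) ∣ n)).card < k)
          ∪ (Finset.Ioc 0 x).filter (fun n => ∀ p ∈ T, ¬ (p : ℕ) ∣ n) := by
      intro n hn
      rw [← Finset.filter_or]
      simp only [Finset.mem_filter] at hn ⊢
      refine ⟨hn.1, ?_⟩
      by_contra hcon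
      push Not at hcon
      obtain ⟨h1, p, hpT, hpn⟩ := hcon
      have h2 : 0 < (T.filter (fun p : Nat.Primes => (p : ℕ) ∣ n)).card :=
        Finset.card_pos.2 ⟨p, Finset.mem_filter.2 ⟨hpT, hpn⟩⟩
      have h3 := hn.2
      rw [Finset.filter_union, Finset.card_union_of_disjoint
        (Finset.disjoint_filter_filter hUT)] at h3
      omega
    have h1 : (((Finset.Ioc 0 x).filter (fun n => ((U ∪ T).filter
        (fun p : Nat.Primes => (p : ℕ) ∣ n)).card < k + 1)).card : ℝ)
        ≤ (((Finset.Ioc 0 x).filter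
          (fun n => (U.filter (fun p : Nat.Primes => (p : ℕ) ∣ n)).card < k)).card : ℝ)
          + sieveCount (fun p : Nat.Primes => (p : ℕ)) T x := by
      unfold sieveCount
      exact_mod_cast (Finset.card_le_card hsub).trans (Finset.card_union_le _ _)
    have h2 := hU x
    have h3 := (abs_le.1 (hC' x)).2
    have h4 := mul_le_mul_of_nonneg_left hT (Nat.cast_nonneg (α := ℝ) x)
    linarith

theorem card_filter_dvd_le_card_divisors (U : Finset Nat.Primes) {n : ℕ} (hn : n ≠ 0) :
    (U.filter (fun p : Nat.Primes => (p : ℕ) ∣ n)).card ≤ n.divisors.card := by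
  refine Finset.card_le_card_of_injOn (fun p => (p : ℕ)) ?_ (fun p _ q _ h => Subtype.ext h)
  intro p hp
  exact Finset.mem_coe.2 (Nat.mem_divisors.2 ⟨(Finset.mem_filter.1 (Finset.mem_coe.1 hp)).2, hn⟩)

/-! ### The product `α` and the conclusion -/

theorem hasProd_alphaConst :
    HasProd (fun p : Nat.Primes => 1 - 1 / ((p : ℕ) : ℝ) ^ (p : ℕ)) alphaConst := by
  refine Multipliable.hasProd ?_
  have hs : Summable (fun p : Nat.Primes => -(1 / ((p : ℕ) : ℝ) ^ (p : ℕ))) := by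
    refine Summable.neg ?_
    have h2 : Summable (fun p : Nat.Primes => 1 / ((p : ℕ) : ℝ) ^ 2) :=
      (Real.summable_one_div_nat_pow.2 one_lt_two).subtype {p : ℕ | p.Prime}
    refine Summable.of_nonneg_of_le (fun p => by positivity) (fun p => ?_) h2
    have : (1 : ℝ) ≤ (p : ℕ) := by exact_mod_cast p.2.one_lt.le
    exact one_div_le_one_div_of_le (by positivity) (pow_le_pow_right₀ this p.2.two_le)
  simpa [sub_eq_add_neg] using Real.multipliable_one_add_of_summable hs

open Classical in
theorem exists_matchable_bound (ε : ℝ) (hε : 0 < ε) : ∃ C : ℝ, ∀ x : ℕ,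
    (((Finset.Icc 1 x).filter (fun n => Matchable n)).card : ℝ) ≤ (alphaConst + ε) * x + C := by
  obtain ⟨S, hS⟩ := (hasProd_alphaConst.eventually_lt_const
    (show alphaConst < alphaConst + ε / 2 by linarith)).exists
  set K := S.sup (fun p => (p : ℕ) ^ 2) with hK
  obtain ⟨U, C, hU⟩ := exists_few_primes_bound K (ε / 2) (half_pos hε)
  obtain ⟨C', hC'⟩ := exists_sieve_bound (fun p : Nat.Primes => (p : ℕ) ^ (p : ℕ))
    (fun p => pow_pos p.2.pos _)
    (fun p q hpq => Nat.Coprime.pow _ _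
      ((Nat.coprime_primes p.2 q.2).2 (fun h => hpq (Subtype.ext h)))) S
  refine ⟨C + C', fun x => ?_⟩
  have hsub : (Finset.Icc 1 x).filter (fun n => Matchable n)
      ⊆ (Finset.Ioc 0 x).filter (fun n => (U.filter (fun p : Nat.Primes => (p : ℕ) ∣ n)).card < K)
        ∪ (Finset.Ioc 0 x).filter (fun n => ∀ p ∈ S, ¬ (p : ℕ) ^ (p : ℕ) ∣ n) := by
    intro n hn
    rw [← Finset.filter_or]
    simp only [Finset.mem_filter, Finset.mem_Icc, Finset.mem_Ioc] at hn ⊢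
    refine ⟨by omega, or_iff_not_imp_right.2 fun h => ?_⟩
    push Not at h
    obtain ⟨p, hpS, hpn⟩ := h
    have hn0 : n ≠ 0 := by omega
    calc _ ≤ n.divisors.card := card_filter_dvd_le_card_divisors U hn0
      _ < (p : ℕ) ^ 2 := hn.2.card_divisors_lt hn0 p.2 hpn
      _ ≤ K := Finset.le_sup (f := fun p : Nat.Primes => (p : ℕ) ^ 2) hpS
  have h1 : (((Finset.Icc 1 x).filter (fun n => Matchable n)).card : ℝ)
      ≤ (((Finset.Ioc 0 x).filter
        (fun n => (U.filter (fun p : Nat.Primes => (p : ℕ) ∣ n)).card < K)).card : ℝ)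
        + sieveCount (fun p : Nat.Primes => (p : ℕ) ^ (p : ℕ)) S x := by
    unfold sieveCount
    exact_mod_cast (Finset.card_le_card hsub).trans (Finset.card_union_le _ _)
  have h2 := hU x
  have h3 := (abs_le.1 (hC' x)).2
  push_cast at h3
  have h4 := mul_le_mul_of_nonneg_left hS.le (Nat.cast_nonneg (α := ℝ) x)
  linarith

open Classical in
theorem stmt_2 :
    Filter.limsup
      (fun x : ℕ => (((Finset.Icc 1 x).filter (fun n => Matchable n)).card : ℝ) / (x : ℝ))
      Filter.atTop ≤ alphaConst := by
  refine le_of_forall_pos_le_add fun ε hε => ?_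
  obtain ⟨C, hC⟩ := exists_matchable_bound (ε / 2) (half_pos hε)
  refine Filter.limsup_le_of_le
    (Filter.isCoboundedUnder_le_of_le _ (x := 0) (fun x => by positivity)) ?_
  have hlim : Filter.Tendsto (fun x : ℕ => C / (x : ℝ)) Filter.atTop (nhds 0) :=
    tendsto_const_div_atTop_nhds_zero_nat C
  filter_upwards [hlim.eventually_lt_const (half_pos hε), Filter.eventually_gt_atTop 0]
    with x hx hx0
  have hx0' : (0 : ℝ) < x := by exact_mod_cast hx0
  rw [div_lt_iff₀ hx0'] at hx
  rw [div_le_iff₀ hx0']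
  have := hC x
  linarith
end

section
/- For every positive integer n, if 2n is matchable, then n is matchable. -/
/-- An injection into the odd numbers up to `N` has a domain of at most `(N + 1) / 2` elements.
Applied to a matching `f`, it bounds the number of divisors that receive an odd value. -/
lemma two_mul_card_le_of_odd {S : Finset ℕ} {N : ℕ} {f : ℕ → ℕ} (hinj : Set.InjOn f S)
    (hf : ∀ x ∈ S, f x ≤ N ∧ f x % 2 = 1) : 2 * S.card ≤ N + 1 := by
  have h : S.card ≤ (Finset.range ((N + 1) / 2)).card := by
    apply Finset.card_le_card_of_injOn (fun x => f x / 2)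
    · intro x hx
      have := hf x hx
      simp only [Finset.coe_range, Set.mem_Iio]
      omega
    · intro x hx y hy hxy
      have h1 := hf x hx
      have h2 := hf y hy
      apply hinj hx hy
      simp only at hxy
      omega
  rw [Finset.card_range] at h
  omega

lemma card_divisors_two_pow_mul (a : ℕ) {m : ℕ} (hm : Odd m) :
    (2 ^ a * m).divisors.card = (a + 1) * m.divisors.card := by
  have hc : Nat.Coprime (2 ^ a) m := Nat.Coprime.pow_left a (Nat.coprime_two_left.mpr hm)
  rw [hc.card_divisors_mul, Nat.divisors_prime_pow Nat.prime_two]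
  simp

lemma matchable_two : Matchable 2 := by
  have hd : (2 : ℕ).divisors = {1, 2} := by decide
  have hI : Finset.Icc 1 ({1, 2} : Finset ℕ).card = {1, 2} := by decide
  refine ⟨fun d => 3 - d, ?_, ?_⟩
  · rw [hd, hI]
    refine ⟨?_, ?_, ?_⟩
    · intro x hx
      simp at hx ⊢
      omega
    · intro x hx y hy hxy
      simp at hx hy hxy
      omega
    · intro y hy
      simp at hy ⊢
      omega
  · rw [hd]
    decide

theorem stmt_3 (n : ℕ) (hn : 0 < n) (h : Matchable (2 * n)) : Matchable n := by
  obtain ⟨ψ, ⟨hmaps, hinj, -⟩, hgcd⟩ := h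
  have hdouble : ∀ d ∈ n.divisors, 2 * d ∈ (2 * n).divisors := by
    intro d hd
    rw [Nat.mem_divisors] at hd ⊢
    exact ⟨Nat.mul_dvd_mul_left 2 hd.1, by omega⟩
  have hsub : ∀ d ∈ n.divisors, d ∈ (2 * n).divisors := by
    intro d hd
    rw [Nat.mem_divisors] at hd ⊢
    exact ⟨hd.1.mul_left 2, by omega⟩
  have hbound : ∀ d ∈ (2 * n).divisors, 1 ≤ ψ d ∧ ψ d ≤ (2 * n).divisors.card := by
    intro d hd
    simpa using hmaps hd
  have hodd : ∀ d ∈ n.divisors, ψ (2 * d) % 2 = 1 := by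
    intro d hd
    have hcop : Nat.Coprime (2 * d) (ψ (2 * d)) := hgcd _ (hdouble d hd)
    exact Nat.odd_iff.mp (Nat.coprime_two_left.mp hcop.coprime_mul_right)
  -- `E` is the set of even divisors of `2 * n`.
  set E : Finset ℕ := n.divisors.image (2 * ·) with hE
  have hEcard : E.card = n.divisors.card :=
    Finset.card_image_of_injective _ (fun x y hxy => by simpa using hxy)
  have hEsub : E ⊆ (2 * n).divisors := by
    intro x hx
    obtain ⟨d, hd, rfl⟩ := Finset.mem_image.mp hx
    exact hdouble d hd
  have hEodd : ∀ x ∈ E, ψ x % 2 = 1 := by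
    intro x hx
    obtain ⟨d, hd, rfl⟩ := Finset.mem_image.mp hx
    exact hodd d hd
  have hcount := two_mul_card_le_of_odd (hinj.mono (Finset.coe_subset.mpr hEsub))
    (fun x hx => ⟨(hbound x (hEsub hx)).2, hEodd x hx⟩)
  rw [hEcard] at hcount
  obtain ⟨a, m, hm, rfl⟩ := Nat.exists_eq_two_pow_mul_odd hn.ne'
  have htwo : (2 * (2 ^ a * m)).divisors.card = (a + 2) * m.divisors.card := by
    rw [← mul_assoc, ← pow_succ', card_divisors_two_pow_mul _ hm]
  have hone := card_divisors_two_pow_mul a hm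
  have hmpos : 0 < m.divisors.card :=
    Finset.card_pos.mpr ⟨1, Nat.one_mem_divisors.mpr hm.pos.ne'⟩
  have hle : a * m.divisors.card ≤ 1 := by
    rw [htwo, hone] at hcount
    linarith
  rcases Nat.eq_zero_or_pos a with rfl | ha
  · simp only [pow_zero, one_mul, zero_add] at *
    -- An odd divisor with an odd value would be one odd value too many.
    have heven : ∀ d ∈ m.divisors, ψ d % 2 = 0 := by
      intro d hd
      by_contra hne
      have hdE : d ∉ E := by
        intro hdE
        obtain ⟨e, -, rfl⟩ := Finset.mem_image.mp hdE
        have := Nat.odd_iff.mp (hm.of_dvd_nat (Nat.dvd_of_mem_divisors hd))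
        omega
      have hins : insert d E ⊆ (2 * m).divisors := Finset.insert_subset (hsub d hd) hEsub
      have := two_mul_card_le_of_odd (hinj.mono (Finset.coe_subset.mpr hins))
        (fun x hx => ⟨(hbound x (hins hx)).2, by
          rcases Finset.mem_insert.mp hx with rfl | hx
          · omega
          · exact hEodd x hx⟩)
      rw [Finset.card_insert_of_notMem hdE] at this
      omega
    have hmaps' : Set.MapsTo (fun d => ψ d / 2) (m.divisors : Set ℕ)
        (Finset.Icc 1 m.divisors.card : Finset ℕ) := by
      intro d hd
      have h1 := heven d hd
      have h2 := hbound d (hsub d hd)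
      simp only [Finset.coe_Icc, Set.mem_Icc]
      omega
    have hinj' : Set.InjOn (fun d => ψ d / 2) (m.divisors : Set ℕ) := by
      intro x hx y hy hxy
      have h1 := heven x hx
      have h2 := heven y hy
      apply hinj (hsub x hx) (hsub y hy)
      simp only at hxy
      omega
    refine ⟨fun d => ψ d / 2, ⟨hmaps', hinj', ?_⟩, ?_⟩
    · exact Finset.surjOn_of_injOn_of_card_le _ hmaps' hinj' (by simp)
    · intro d hd
      exact Nat.Coprime.coprime_dvd_right (Nat.div_dvd_of_dvd (Nat.dvd_of_mod_eq_zero (heven d hd)))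
        (hgcd d (hsub d hd))
  · have ha1 : a = 1 := by nlinarith
    subst ha1
    have hm1 : m = 1 := by
      have hc : m.divisors.card = 1 := by omega
      exact Finset.card_le_one.mp hc.le m (Nat.mem_divisors_self m hm.pos.ne') 1
        (Nat.one_mem_divisors.mpr hm.pos.ne')
    subst hm1
    exact matchable_two
end

section
/- Every squarefree positive integer having at least 45 distinct prime factors is matchable. -/
section

open Finset

/-! ### Counting in intervals -/

theorem card_Ico_mul_of_periodic (p : ℕ → Prop) [DecidablePred p] (D k q : ℕ)
    (hp : Function.Periodic p D) :
    #{x ∈ Ico k (k + D * q) | p x} = q * Nat.count p D := by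
  induction q with
  | zero => simp
  | succ q ih =>
    have h1 : Ico k (k + D * (q + 1)) = Ico k (k + D * q) ∪ Ico (k + D * q) (k + D * q + D) := by
      rw [Finset.Ico_union_Ico_eq_Ico (by omega) (by omega)]; congr 1; ring
    rw [h1, filter_union, card_union_of_disjoint, ih, Nat.filter_Ico_card_eq_of_periodic _ _ _ hp]
    · ring
    · apply disjoint_filter_filter
      rw [Finset.disjoint_left]; intro x; simp only [mem_Ico]; omega

theorem count_dvd_coprime (d R : ℕ) (hd : 0 < d) (hc : Nat.Coprime R d) :
    Nat.count (fun x => d ∣ x ∧ R.Coprime x) (d * R) = Nat.totient R := by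
  rw [Nat.count_eq_card_filter_range, Nat.totient_eq_card_coprime]
  symm
  apply card_bij (fun z _ => d * z)
  · intro z hz
    simp only [mem_filter, mem_range] at hz ⊢
    exact ⟨Nat.mul_lt_mul_of_pos_left hz.1 hd, dvd_mul_right _ _, hc.mul_right hz.2⟩
  · intro a _ b _ h; exact Nat.eq_of_mul_eq_mul_left hd h
  · intro x hx
    simp only [mem_filter, mem_range] at hx
    obtain ⟨hx, ⟨z, rfl⟩, hz⟩ := hx
    refine ⟨z, ?_, rfl⟩
    simp only [mem_filter, mem_range]
    exact ⟨Nat.lt_of_mul_lt_mul_left hx, hz.coprime_mul_left_right⟩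

theorem periodic_dvd_coprime (d R : ℕ) :
    Function.Periodic (fun x => d ∣ x ∧ R.Coprime x) (d * R) := by
  intro x
  simp only [eq_iff_iff]
  rw [Nat.dvd_add_left (dvd_mul_right _ _)]
  simp

/-- Rounding the length of the interval up to a multiple of `d * R` leaves `φ(R)` solutions in each
period. -/
theorem card_dvd_coprime_le (k N d R : ℕ) (hd : 0 < d) (hR : 0 < R) (hc : Nat.Coprime R d) :
    (#{x ∈ Ico k (k + N) | d ∣ x ∧ R.Coprime x} : ℝ) ≤ R.totient * (N / (d * R) + 1) := by
  have hD : 0 < d * R := Nat.mul_pos hd hR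
  have h1 : #{x ∈ Ico k (k + N) | d ∣ x ∧ R.Coprime x} ≤ (N / (d * R) + 1) * R.totient := by
    rw [← count_dvd_coprime d R hd hc, ← card_Ico_mul_of_periodic _ _ k _ (periodic_dvd_coprime d R)]
    apply card_le_card
    apply filter_subset_filter
    apply Ico_subset_Ico_right
    have := Nat.lt_mul_div_succ N hD
    omega
  have h2 : ((N / (d * R) : ℕ) : ℝ) ≤ N / (d * R) := by
    have := @Nat.cast_div_le ℝ _ _ _ N (d * R)
    push_cast at this; exact this
  calc (#{x ∈ Ico k (k + N) | d ∣ x ∧ R.Coprime x} : ℝ)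
      ≤ (((N / (d * R) + 1) * R.totient : ℕ) : ℝ) := by exact_mod_cast h1
    _ = R.totient * (((N / (d * R) : ℕ) : ℝ) + 1) := by push_cast; ring
    _ ≤ _ := by gcongr

theorem le_card_dvd_coprime (k N d R : ℕ) (hd : 0 < d) (hR : 0 < R) (hc : Nat.Coprime R d) :
    R.totient * ((N : ℝ) / (d * R) - 1) ≤ #{x ∈ Ico k (k + N) | d ∣ x ∧ R.Coprime x} := by
  have hD : 0 < d * R := Nat.mul_pos hd hR
  have h1 : (N / (d * R)) * R.totient ≤ #{x ∈ Ico k (k + N) | d ∣ x ∧ R.Coprime x} := by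
    rw [← count_dvd_coprime d R hd hc, ← card_Ico_mul_of_periodic _ _ k _ (periodic_dvd_coprime d R)]
    apply card_le_card
    apply filter_subset_filter
    apply Ico_subset_Ico_right
    have := Nat.mul_div_le N (d * R)
    omega
  have h2 : (N : ℝ) / (d * R) - 1 ≤ ((N / (d * R) : ℕ) : ℝ) := by
    have := Nat.lt_mul_div_succ N hD
    have h3 : (N : ℝ) < (d * R) * (((N / (d * R) : ℕ) : ℝ) + 1) := by exact_mod_cast this
    have h4 : (0 : ℝ) < d * R := by exact_mod_cast hD
    rw [sub_le_iff_le_add, div_le_iff₀ h4]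
    linarith
  calc R.totient * ((N : ℝ) / (d * R) - 1) ≤ R.totient * ((N / (d * R) : ℕ) : ℝ) := by gcongr
    _ = (((N / (d * R)) * R.totient : ℕ) : ℝ) := by push_cast; ring
    _ ≤ _ := by exact_mod_cast h1

/-! ### Elementary symmetric sums -/

/-- The `j`-th elementary symmetric function of nonnegative weights is at most
`(∑ w) ^ j / j!`. -/
theorem sum_powersetCard_prod_le {ι : Type*} [DecidableEq ι] (L : Finset ι) (w : ι → ℝ) (hw : ∀ i, 0 ≤ w i)
    (j : ℕ) : (∑ T ∈ L.powersetCard j, ∏ q ∈ T, w q) * j.factorial ≤ (∑ q ∈ L, w q) ^ j := by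
  induction L using Finset.induction_on generalizing j with
  | empty =>
    rcases j with _ | j
    · simp
    · rw [powersetCard_eq_empty.2 (by simp)]; simp
  | insert a s ha ih =>
    rcases j with _ | j
    · simp
    · rw [powersetCard_succ_insert ha, sum_union, sum_image, sum_insert ha]
      · have h1 : ∀ T ∈ s.powersetCard j, ∏ q ∈ insert a T, w q = w a * ∏ q ∈ T, w q := by
          intro T hT
          rw [mem_powersetCard] at hT
          exact prod_insert (fun h => ha (hT.1 h))
        rw [sum_congr rfl h1, ← mul_sum]
        have i1 := ih (j + 1)
        have i2 := ih j
        set x := ∑ q ∈ s, w q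
        have hx : 0 ≤ x := sum_nonneg fun i _ => hw i
        have h3 : x ^ (j + 1) + (j + 1) * w a * x ^ j ≤ (w a + x) ^ (j + 1) := by
          have hwa := hw a
          have := pow_add_mul_le_add_pow (a := x) (b := w a) hx (by positivity) (j + 1)
          simp only [Nat.add_sub_cancel, Nat.cast_add, Nat.cast_one] at this
          rw [add_comm (w a) x]
          linarith
        have h4 : ((j + 1).factorial : ℝ) = (j + 1) * j.factorial := by
          rw [Nat.factorial_succ]; push_cast; ring
        have h5 : (0:ℝ) ≤ (j + 1) * w a := by have := hw a; positivity
        have h6 := mul_le_mul_of_nonneg_left i2 h5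
        rw [h4] at i1 ⊢
        linarith
      · intro T hT T' hT' h
        simp only [mem_coe, mem_powersetCard] at hT hT'
        have := congrArg (fun X => X.erase a) h
        simpa [erase_insert (fun h => ha (hT.1 h)), erase_insert (fun h => ha (hT'.1 h))] using this
      · rw [Finset.disjoint_left]
        intro T hT hT'
        rw [mem_powersetCard] at hT
        rw [mem_image] at hT'
        obtain ⟨T', -, rfl⟩ := hT'
        exact ha (hT.1 (mem_insert_self _ _))

/-! ### Stochastic domination -/

/-- For a uniformly random `m ∈ M`, the random set `{p ∈ G | p ∣ m}` is stochastically dominated by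
a uniformly random subset of `G`: each up-closed family `U` of subsets is at most as probable for
the former as for the latter. The denominators `#M` and `2 ^ #G` are cleared. -/
def Dominated (M G : Finset ℕ) : Prop :=
  ∀ (U : Finset ℕ → Prop) [DecidablePred U], Monotone U →
    #{m ∈ M | U {p ∈ G | p ∣ m}} * 2 ^ #G ≤ #M * #{T ∈ G.powerset | U T}

/-- Conditioning on one prime. The family `U` splits into its sections at sets with and without `p`;
the former section is the larger one, and it carries at most half of the mass. -/
theorem Dominated.insert_prime {M G : Finset ℕ} {p : ℕ} (hp : p ∉ G)
    (hcard : #{m ∈ M | p ∣ m} ≤ #{m ∈ M | ¬ p ∣ m})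
    (h1 : Dominated {m ∈ M | p ∣ m} G) (h0 : Dominated {m ∈ M | ¬ p ∣ m} G) :
    Dominated M (insert p G) := by
  intro U _ hU
  have hU1 : Monotone (fun T => U (insert p T)) := fun a b hab => hU (insert_subset_insert p hab)
  have e1 := h1 (fun T => U (insert p T)) hU1
  have e0 := h0 U hU
  have hs : #{m ∈ M | U {q ∈ insert p G | q ∣ m}} =
      #{m ∈ {m ∈ M | p ∣ m} | U (insert p {q ∈ G | q ∣ m})} +
      #{m ∈ {m ∈ M | ¬ p ∣ m} | U {q ∈ G | q ∣ m}} := by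
    rw [← card_filter_add_card_filter_not (s := {m ∈ M | U {q ∈ insert p G | q ∣ m}}) (fun m => p ∣ m)]
    congr 2
    · ext m; simp only [mem_filter, filter_insert]
      constructor
      · rintro ⟨⟨a, b⟩, c⟩; rw [if_pos c] at b; exact ⟨⟨a, c⟩, b⟩
      · rintro ⟨⟨a, c⟩, b⟩; rw [if_pos c]; exact ⟨⟨a, b⟩, c⟩
    · ext m; simp only [mem_filter, filter_insert]
      constructor
      · rintro ⟨⟨a, b⟩, c⟩; rw [if_neg c] at b; exact ⟨⟨a, c⟩, b⟩
      · rintro ⟨⟨a, c⟩, b⟩; rw [if_neg c]; exact ⟨⟨a, b⟩, c⟩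
  have hpow : #{T ∈ (insert p G).powerset | U T} =
      #{T ∈ G.powerset | U T} + #{T ∈ G.powerset | U (insert p T)} := by
    rw [powerset_insert, filter_union, card_union_of_disjoint, filter_image, card_image_of_injOn]
    · intro T hT T' hT' h
      simp only [mem_coe, mem_filter, mem_powerset] at hT hT'
      have := congrArg (fun X => X.erase p) h
      simpa [erase_insert (fun h => hp (hT.1 h)), erase_insert (fun h => hp (hT'.1 h))] using this
    · rw [Finset.disjoint_left]
      intro T hT hT'
      simp only [mem_filter, mem_powerset, mem_image] at hT hT'
      obtain ⟨⟨T', -, rfl⟩, -⟩ := hT'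
      exact hp (hT.1 (mem_insert_self _ _))
  have hle : #{T ∈ G.powerset | U T} ≤ #{T ∈ G.powerset | U (insert p T)} :=
    card_le_card (monotone_filter_right _ fun T _ hT => hU (subset_insert p T) hT)
  rw [hs, hpow, card_insert_of_notMem hp, ← card_filter_add_card_filter_not (s := M) (fun m => p ∣ m)]
  zify at *
  rw [pow_succ]
  nlinarith [mul_nonneg (sub_nonneg.2 hcard) (sub_nonneg.2 hle)]

/-- Domination depends only on the multiset of divisibility patterns. -/
theorem Dominated.congr {M M' G : Finset ℕ} (g : ℕ → ℕ) (hg : Set.BijOn g M M')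
    (hpat : ∀ m ∈ M, ∀ p ∈ G, p ∣ g m ↔ p ∣ m) (h : Dominated M' G) : Dominated M G := by
  intro U _ hU
  have e := h U hU
  have hM : #M = #M' := card_bij (fun m _ => g m) (fun a ha => hg.1 ha)
    (fun a ha b hb hab => hg.2.1 ha hb hab) (fun b hb => by
      obtain ⟨a, ha, rfl⟩ := hg.2.2 hb; exact ⟨a, ha, rfl⟩)
  have hf : ∀ m ∈ M, {p ∈ G | p ∣ g m} = {p ∈ G | p ∣ m} := fun m hm =>
    filter_congr (hpat m hm)
  have hc : #{m ∈ M | U {p ∈ G | p ∣ m}} = #{m ∈ M' | U {p ∈ G | p ∣ m}} := by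
    apply card_bij (fun m _ => g m)
    · intro a ha
      rw [mem_filter] at ha ⊢
      exact ⟨hg.1 ha.1, by rw [hf a ha.1]; exact ha.2⟩
    · intro a ha b hb hab
      rw [mem_filter] at ha hb
      exact hg.2.1 ha.1 hb.1 hab
    · intro b hb
      rw [mem_filter] at hb
      obtain ⟨a, ha, rfl⟩ := hg.2.2 hb.1
      refine ⟨a, ?_, rfl⟩
      rw [mem_filter]
      refine ⟨ha, ?_⟩
      rw [← hf a ha]; exact hb.2
  rw [hc, hM]; exact e

/-! ### Level counts -/

/-- Domination from counts of the levels `{m | at least j elements of L divide m}`. If the up-closed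
family `U` contains the singletons of exactly `A ≠ ∅`, then every subset of `L` outside `U` is a
subset of `L \ A`, and `hs` applies. If `U` contains no singleton, let `j ≥ 2` be the least size of a
member; then `U` has at least `2 ^ (#L - j)` members, and `hj` applies. -/
theorem dominated_of_levels {M L : Finset ℕ}
    (hs : ∀ A ⊆ L, A.Nonempty →
      (#{m ∈ M | ∃ q ∈ A, q ∣ m} + #{m ∈ M | 2 ≤ #{q ∈ L | q ∣ m}}) * 2 ^ #A + #M ≤ #M * 2 ^ #A)
    (hj : ∀ j, 2 ≤ j → #{m ∈ M | j ≤ #{q ∈ L | q ∣ m}} * 2 ^ j ≤ #M) :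
    Dominated M L := by
  intro U _ hU
  by_cases h0 : U ∅
  · have hall : ∀ T, U T := fun T => hU (empty_subset T) h0
    simp [hall]
  set A := {q ∈ L | U {q}} with hA
  have hAL : A ⊆ L := filter_subset _ _
  -- In the first case the minimal size of a member of `U` is at least two.
  rcases A.eq_empty_or_nonempty with hAe | hAn
  · by_cases hT : ({T ∈ L.powerset | U T}).Nonempty
    · obtain ⟨T, hT, hmin⟩ := exists_min_image _ card hT
      rw [mem_filter, mem_powerset] at hT
      have h2 : 2 ≤ #T := by
        by_contra hlt
        have : #T = 0 ∨ #T = 1 := by omega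
        rcases this with h | h
        · rw [card_eq_zero] at h; subst h; exact h0 hT.2
        · obtain ⟨q, rfl⟩ := card_eq_one.1 h
          have : q ∈ A := by
            rw [hA, mem_filter]; exact ⟨hT.1 (mem_singleton_self q), hT.2⟩
          rw [hAe] at this; simp at this
      have h3 : 2 ^ (#L - #T) ≤ #{T ∈ L.powerset | U T} := by
        rw [← card_sdiff_of_subset hT.1, ← card_powerset]
        apply card_le_card_of_injOn (fun S => T ∪ S)
        · intro S hS
          simp only [mem_coe, mem_powerset, mem_filter] at hS ⊢
          exact ⟨union_subset hT.1 (hS.trans sdiff_subset), hU subset_union_left hT.2⟩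
        · intro S hS S' hS' h
          simp only [mem_coe, mem_powerset] at hS hS'
          have d1 : Disjoint T S := disjoint_of_subset_right hS disjoint_sdiff
          have d2 : Disjoint T S' := disjoint_of_subset_right hS' disjoint_sdiff
          have := congrArg (fun X => X \ T) h
          simpa [union_sdiff_cancel_left d1, union_sdiff_cancel_left d2] using this
      have h4 : #{m ∈ M | U {q ∈ L | q ∣ m}} ≤ #{m ∈ M | #T ≤ #{q ∈ L | q ∣ m}} := by
        apply card_le_card
        apply monotone_filter_right
        intro m _ hm
        exact hmin _ (by rw [mem_filter, mem_powerset]; exact ⟨filter_subset _ _, hm⟩)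
      have h5 := hj _ h2
      have h6 : 2 ^ #L = 2 ^ #T * 2 ^ (#L - #T) := by
        rw [← pow_add, Nat.add_sub_cancel' (card_le_card hT.1)]
      calc _ ≤ #{m ∈ M | #T ≤ #{q ∈ L | q ∣ m}} * (2 ^ #T * 2 ^ (#L - #T)) := by
            rw [h6]; gcongr
        _ = #{m ∈ M | #T ≤ #{q ∈ L | q ∣ m}} * 2 ^ #T * 2 ^ (#L - #T) := by ring
        _ ≤ _ := by gcongr
    · rw [not_nonempty_iff_eq_empty] at hT
      have : #{m ∈ M | U {q ∈ L | q ∣ m}} = 0 := by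
        rw [card_eq_zero, filter_eq_empty_iff]
        intro m _ hm
        have : {q ∈ L | q ∣ m} ∈ ({T ∈ L.powerset | U T} : Finset _) := by
          rw [mem_filter, mem_powerset]; exact ⟨filter_subset _ _, hm⟩
        rw [hT] at this; simp at this
      rw [this]; simp
  · have h1 : #{m ∈ M | U {q ∈ L | q ∣ m}} ≤
        #{m ∈ M | ∃ q ∈ A, q ∣ m} + #{m ∈ M | 2 ≤ #{q ∈ L | q ∣ m}} := by
      refine le_trans (card_le_card ?_) (card_union_le _ _)
      intro m hm
      simp only [mem_filter, mem_union] at hm ⊢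
      by_cases h2 : 2 ≤ #{q ∈ L | q ∣ m}
      · exact Or.inr ⟨hm.1, h2⟩
      · left
        refine ⟨hm.1, ?_⟩
        have : #{q ∈ L | q ∣ m} = 0 ∨ #{q ∈ L | q ∣ m} = 1 := by omega
        rcases this with h | h
        · rw [card_eq_zero] at h; rw [h] at hm; exact absurd hm.2 h0
        · obtain ⟨q, hq⟩ := card_eq_one.1 h
          have hq' : q ∈ ({q ∈ L | q ∣ m} : Finset ℕ) := by rw [hq]; exact mem_singleton_self q
          rw [mem_filter] at hq'
          rw [hq] at hm
          exact ⟨q, by rw [hA, mem_filter]; exact ⟨hq'.1, hm.2⟩, hq'.2⟩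
    have h2 : 2 ^ #L ≤ #{T ∈ L.powerset | U T} + 2 ^ (#L - #A) := by
      -- Sets outside `U` avoid `A`.
      rw [← card_sdiff_of_subset hAL, ← card_powerset, ← card_powerset,
        ← card_filter_add_card_filter_not (s := L.powerset) U]
      gcongr
      intro T hT
      simp only [mem_filter, mem_powerset] at hT ⊢
      intro q hq
      rw [mem_sdiff]
      refine ⟨hT.1 hq, fun hqA => hT.2 ?_⟩
      rw [hA, mem_filter] at hqA
      exact hU (singleton_subset_iff.2 hq) hqA.2
    have h3 := hs A hAL hAn
    have h6 : 2 ^ #L = 2 ^ #A * 2 ^ (#L - #A) := by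
      rw [← pow_add, Nat.add_sub_cancel' (card_le_card hAL)]
    set X := #{m ∈ M | ∃ q ∈ A, q ∣ m} + #{m ∈ M | 2 ≤ #{q ∈ L | q ∣ m}}
    have h7 : X * 2 ^ #L + #M * 2 ^ (#L - #A) ≤ #M * 2 ^ #L := by
      rw [h6]
      calc _ = (X * 2 ^ #A + #M) * 2 ^ (#L - #A) := by ring
        _ ≤ (#M * 2 ^ #A) * 2 ^ (#L - #A) := by gcongr
        _ = _ := by ring
    have h8 := Nat.mul_le_mul_left (#M) h2
    have h9 := Nat.mul_le_mul_right (2 ^ #L) h1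
    rw [mul_add] at h8
    omega

theorem card_level_le_sum (M L : Finset ℕ) (j : ℕ) :
    #{m ∈ M | j ≤ #{q ∈ L | q ∣ m}} ≤ ∑ T ∈ L.powersetCard j, #{m ∈ M | ∀ q ∈ T, q ∣ m} := by
  refine le_trans (card_le_card ?_) card_biUnion_le
  intro m hm
  rw [mem_filter] at hm
  obtain ⟨T, hT, hTc⟩ := exists_subset_card_eq hm.2
  rw [mem_biUnion]
  refine ⟨T, mem_powersetCard.2 ⟨hT.trans (filter_subset _ _), hTc⟩, ?_⟩
  rw [mem_filter]
  exact ⟨hm.1, fun q hq => (mem_filter.1 (hT hq)).2⟩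

/-- The integers of `[k, k + N)` that are divisible by `P` and coprime to `R`: those with a
prescribed divisibility pattern at the small primes. -/
def sieved (k N P R : ℕ) : Finset ℕ := {x ∈ Ico k (k + N) | P ∣ x ∧ R.Coprime x}

theorem sieved_filter_dvd (k N P R : ℕ) (T : Finset ℕ) (hT : ∀ q ∈ T, q.Prime)
    (hP : ∀ q ∈ T, P.Coprime q) :
    ({m ∈ sieved k N P R | ∀ q ∈ T, q ∣ m} : Finset ℕ) = sieved k N (P * ∏ q ∈ T, q) R := by
  ext x
  simp only [sieved, mem_filter]
  have : (∏ q ∈ T, q) ∣ x ↔ ∀ q ∈ T, q ∣ x := by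
    constructor
    · intro h q hq; exact (dvd_prod_of_mem _ hq).trans h
    · intro h; exact Finset.prod_primes_dvd x (fun q hq => (hT q hq).prime) h
  have hc : P.Coprime (∏ q ∈ T, q) := Nat.Coprime.prod_right hP
  constructor
  · rintro ⟨⟨h1, h2, h3⟩, h4⟩
    exact ⟨h1, hc.mul_dvd_of_dvd_of_dvd h2 (this.2 h4), h3⟩
  · rintro ⟨h1, h2, h3⟩
    exact ⟨⟨h1, (dvd_mul_right _ _).trans h2, h3⟩, this.1 ((dvd_mul_left _ _).trans h2)⟩

theorem sum_inv_pow (L : Finset ℕ) (lam : ℝ) (hlam : ∑ q ∈ L, (1 / (q : ℝ)) ≤ lam) (j : ℕ) :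
    ∑ T ∈ L.powersetCard j, (1 / ((∏ q ∈ T, q : ℕ) : ℝ)) ≤ lam ^ j / j.factorial := by
  have h := sum_powersetCard_prod_le L (fun q => 1 / (q : ℝ)) (fun q => by positivity) j
  have hf : (0 : ℝ) < j.factorial := by exact_mod_cast j.factorial_pos
  rw [le_div_iff₀ hf]
  calc _ = (∑ T ∈ L.powersetCard j, ∏ q ∈ T, (1 / (q : ℝ))) * j.factorial := by
        congr 1; apply sum_congr rfl; intro T _; push_cast; simp
    _ ≤ _ := h
    _ ≤ _ := by gcongr

/-- Union bound for the level `j`, with main term `λ ^ j / j!` and a rounding error for each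
`j`-subset of `L`. -/
theorem card_level_le {k N P R : ℕ} {L : Finset ℕ} (hL : ∀ q ∈ L, q.Prime)
    (hP0 : 0 < P) (hR0 : 0 < R) (hPR : R.Coprime P)
    (hPL : ∀ q ∈ L, P.Coprime q) (hRL : ∀ q ∈ L, R.Coprime q)
    (hlam : ∑ q ∈ L, (1 / (q : ℝ)) ≤ 7 / 10) (j : ℕ) :
    (#{m ∈ sieved k N P R | j ≤ #{q ∈ L | q ∣ m}} : ℝ) ≤
      R.totient * (N / (P * R) * ((7 / 10) ^ j / j.factorial) + (#L).choose j) := by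
  have h1 : ∀ T ∈ L.powersetCard j, (#{m ∈ sieved k N P R | ∀ q ∈ T, q ∣ m} : ℝ) ≤
      R.totient * (N / (P * R) * (1 / ((∏ q ∈ T, q : ℕ) : ℝ)) + 1) := by
    intro T hT
    rw [mem_powersetCard] at hT
    rw [sieved_filter_dvd k N P R T (fun q hq => hL q (hT.1 hq)) (fun q hq => hPL q (hT.1 hq))]
    have hQ : 0 < ∏ q ∈ T, q := prod_pos fun q hq => (hL q (hT.1 hq)).pos
    have := card_dvd_coprime_le k N (P * ∏ q ∈ T, q) R (by positivity) hR0
      (hPR.mul_right (Nat.Coprime.prod_right fun q hq => hRL q (hT.1 hq)))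
    refine this.trans (le_of_eq ?_)
    have hQ' : ((∏ q ∈ T, q : ℕ) : ℝ) ≠ 0 := by exact_mod_cast hQ.ne'
    rw [Nat.cast_mul]
    field_simp
  calc (#{m ∈ sieved k N P R | j ≤ #{q ∈ L | q ∣ m}} : ℝ)
      ≤ ∑ T ∈ L.powersetCard j, (#{m ∈ sieved k N P R | ∀ q ∈ T, q ∣ m} : ℝ) := by
        exact_mod_cast card_level_le_sum _ L j
    _ ≤ ∑ T ∈ L.powersetCard j, R.totient * (N / (P * R) * (1 / ((∏ q ∈ T, q : ℕ) : ℝ)) + 1) :=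
        sum_le_sum h1
    _ = R.totient * (N / (P * R) * (∑ T ∈ L.powersetCard j, (1 / ((∏ q ∈ T, q : ℕ) : ℝ))) +
          (#L).choose j) := by
        rw [← mul_sum, sum_add_distrib, ← mul_sum]; simp
    _ ≤ _ := by gcongr; exact sum_inv_pow L _ hlam j

/-- Union bound for the level `j` that discards the condition at `R` and has no rounding error: each
`d` has at most `3 * N / d` multiples in the interval. -/
theorem card_level_le_crude {k N P R : ℕ} {L : Finset ℕ} (hL : ∀ q ∈ L, q.Prime)
    (hP0 : 0 < P) (hPL : ∀ q ∈ L, P.Coprime q)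
    (hlam : ∑ q ∈ L, (1 / (q : ℝ)) ≤ 7 / 10)
    (hcr : ∀ T ⊆ L, (P * ∏ q ∈ T, q) * #{x ∈ Ico k (k + N) | (P * ∏ q ∈ T, q) ∣ x} ≤ 3 * N) (j : ℕ) :
    (#{m ∈ sieved k N P R | j ≤ #{q ∈ L | q ∣ m}} : ℝ) ≤
      3 * N / P * ((7 / 10) ^ j / j.factorial) := by
  have h1 : ∀ T ∈ L.powersetCard j, (#{m ∈ sieved k N P R | ∀ q ∈ T, q ∣ m} : ℝ) ≤
      3 * N / P * (1 / ((∏ q ∈ T, q : ℕ) : ℝ)) := by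
    intro T hT
    rw [mem_powersetCard] at hT
    rw [sieved_filter_dvd k N P R T (fun q hq => hL q (hT.1 hq)) (fun q hq => hPL q (hT.1 hq))]
    have hQ : 0 < ∏ q ∈ T, q := prod_pos fun q hq => (hL q (hT.1 hq)).pos
    have h2 := hcr T hT.1
    have h3 : #(sieved k N (P * ∏ q ∈ T, q) R) ≤
        #{x ∈ Ico k (k + N) | (P * ∏ q ∈ T, q) ∣ x} :=
      card_le_card (monotone_filter_right _ fun x _ hx => hx.1)
    have h4 := (Nat.mul_le_mul_left (P * ∏ q ∈ T, q) h3).trans h2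
    have h5 : (P : ℝ) * ((∏ q ∈ T, q : ℕ) : ℝ) * #(sieved k N (P * ∏ q ∈ T, q) R) ≤ 3 * N := by
      exact_mod_cast h4
    have hQ' : (0 : ℝ) < ((∏ q ∈ T, q : ℕ) : ℝ) := by exact_mod_cast hQ
    have hP' : (0 : ℝ) < P := by exact_mod_cast hP0
    rw [div_mul_div_comm, mul_one, le_div_iff₀ (by positivity)]
    linarith
  calc (#{m ∈ sieved k N P R | j ≤ #{q ∈ L | q ∣ m}} : ℝ)
      ≤ ∑ T ∈ L.powersetCard j, (#{m ∈ sieved k N P R | ∀ q ∈ T, q ∣ m} : ℝ) := by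
        exact_mod_cast card_level_le_sum _ L j
    _ ≤ ∑ T ∈ L.powersetCard j, 3 * N / P * (1 / ((∏ q ∈ T, q : ℕ) : ℝ)) :=
        sum_le_sum h1
    _ = 3 * N / P * (∑ T ∈ L.powersetCard j, (1 / ((∏ q ∈ T, q : ℕ) : ℝ))) := by
        rw [← mul_sum]
    _ ≤ _ := by gcongr; exact sum_inv_pow L _ hlam j

theorem card_single_le {k N P R : ℕ} {A : Finset ℕ} (hL : ∀ q ∈ A, q.Prime)
    (hP0 : 0 < P) (hR0 : 0 < R) (hPR : R.Coprime P)
    (hPL : ∀ q ∈ A, P.Coprime q) (hRL : ∀ q ∈ A, R.Coprime q) :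
    (#{m ∈ sieved k N P R | ∃ q ∈ A, q ∣ m} : ℝ) ≤
      R.totient * (N / (P * R) * (∑ q ∈ A, 1 / (q : ℝ)) + #A) := by
  have h0 : #{m ∈ sieved k N P R | ∃ q ∈ A, q ∣ m} ≤
      ∑ q ∈ A, #{m ∈ sieved k N P R | ∀ x ∈ ({q} : Finset ℕ), x ∣ m} := by
    refine le_trans (card_le_card ?_) card_biUnion_le
    intro m hm
    simp only [mem_filter, mem_biUnion, mem_singleton, forall_eq] at hm ⊢
    obtain ⟨h1, q, hq, h2⟩ := hm
    exact ⟨q, hq, h1, h2⟩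
  calc (#{m ∈ sieved k N P R | ∃ q ∈ A, q ∣ m} : ℝ)
      ≤ ∑ q ∈ A, (#{m ∈ sieved k N P R | ∀ x ∈ ({q} : Finset ℕ), x ∣ m} : ℝ) := by exact_mod_cast h0
    _ ≤ ∑ q ∈ A, R.totient * (N / (P * R) * (1 / (q : ℝ)) + 1) := by
        apply sum_le_sum
        intro q hq
        rw [sieved_filter_dvd k N P R {q} (by simpa using hL q hq) (by simpa using hPL q hq)]
        have := card_dvd_coprime_le k N (P * q) R (Nat.mul_pos hP0 (hL q hq).pos) hR0
          (hPR.mul_right (hRL q hq))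
        rw [prod_singleton]
        refine this.trans (le_of_eq ?_)
        have hq' : (q : ℝ) ≠ 0 := by exact_mod_cast (hL q hq).ne_zero
        rw [Nat.cast_mul]
        field_simp
    _ = _ := by rw [← mul_sum, sum_add_distrib, ← mul_sum]; simp

/-! ### Domination on intervals, for general parameters -/

/-- If all primes of `R` are at most `y`, then `R / φ(R) = ∏ p / (p - 1)` is at most the telescoping
product of `i / (i - 1)` over `2 ≤ i ≤ y`. -/
theorem le_totient_mul (R y : ℕ) (hy : 1 ≤ y) (h : ∀ p ∈ R.primeFactors, p ≤ y) :
    R ≤ R.totient * y := by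
  have key : ∀ y : ℕ, 1 ≤ y → ∀ A : Finset ℕ, A ⊆ Icc 2 y → ∏ p ∈ A, p ≤ y * ∏ p ∈ A, (p - 1) := by
    intro y hy
    induction y, hy using Nat.le_induction with
    | base => intro A hA; rw [Icc_eq_empty (by norm_num), subset_empty] at hA; subst hA; simp
    | succ y hy ih =>
      intro A hA
      have hA' : A.erase (y + 1) ⊆ Icc 2 y := by
        intro p hp
        rw [mem_erase] at hp
        have := mem_Icc.1 (hA hp.2)
        rw [mem_Icc]; omega
      have h1 := ih _ hA'
      by_cases hm : y + 1 ∈ A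
      · rw [← mul_prod_erase A (fun p => p) hm, ← mul_prod_erase A (fun p => p - 1) hm]
        simp only [Nat.add_sub_cancel]
        exact Nat.mul_le_mul_left _ h1
      · rw [erase_eq_of_notMem hm] at h1
        exact h1.trans (Nat.mul_le_mul_right _ (Nat.le_succ y))
  have h1 := key y hy R.primeFactors (fun p hp => mem_Icc.2
    ⟨(Nat.prime_of_mem_primeFactors hp).two_le, h p hp⟩)
  have h2 := Nat.totient_mul_prod_primeFactors R
  have h3 : 0 < ∏ p ∈ R.primeFactors, (p - 1) := prod_pos fun p hp => by
    have := (Nat.prime_of_mem_primeFactors hp).two_le; omega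
  refine Nat.le_of_mul_le_mul_right ?_ h3
  rw [← h2]
  calc _ ≤ R.totient * (y * ∏ p ∈ R.primeFactors, (p - 1)) := Nat.mul_le_mul_left _ h1
    _ = _ := by ring

/-- Since `c ≤ j₀ + 1`, the inequality `c ^ j ≤ C * j!` propagates upwards from `j₀`. -/
theorem pow_le_factorial (c C : ℝ) (hc : 0 ≤ c) (hC : 0 ≤ C) (j₀ : ℕ) (hj₀ : c ≤ j₀ + 1) (h : c ^ j₀ ≤ C * j₀.factorial)
    (j : ℕ) (hj : j₀ ≤ j) : c ^ j ≤ C * j.factorial := by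
  induction j, hj using Nat.le_induction with
  | base => exact h
  | succ j hj ih =>
    rw [pow_succ, Nat.factorial_succ]
    have : c ≤ (j + 1 : ℝ) := hj₀.trans (by gcongr)
    push_cast
    calc c ^ j * c ≤ C * j.factorial * (j + 1) := by gcongr
      _ = _ := by ring

/-- Domination at the large primes `L`, once the pattern at the small primes is fixed. The hypotheses
`hN2`, `hN3`, `hJ` serve the levels `j ≤ 2`, `3 ≤ j ≤ J` and `j > J`. -/
theorem dominated_sieved_base {k N P R y J : ℕ} {L : Finset ℕ} (hL : ∀ q ∈ L, q.Prime)
    (hL14 : ∀ q ∈ L, 14 ≤ q)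
    (hP0 : 0 < P) (hR0 : 0 < R) (hPR : R.Coprime P)
    (hPL : ∀ q ∈ L, P.Coprime q) (hRL : ∀ q ∈ L, R.Coprime q)
    (hlam : ∑ q ∈ L, (1 / (q : ℝ)) ≤ 7 / 10)
    (hcr : ∀ T ⊆ L, (P * ∏ q ∈ T, q) * #{x ∈ Ico k (k + N) | (P * ∏ q ∈ T, q) ∣ x} ≤ 3 * N)
    (hy : R ≤ R.totient * y)
    (hN2 : 2000 * (#L ^ 2 + 1) * (P * R) ≤ N)
    (hN3 : ∀ j, 3 ≤ j → j ≤ J → (2 * #L) ^ j * 4 * (P * R) ≤ j.factorial * N)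
    (hJ : ∀ j, J < j → 3 * (y : ℝ) * (14 / 10) ^ j ≤ 99 / 100 * j.factorial) :
    Dominated (sieved k N P R) L := by
  have hP' : (0 : ℝ) < P := by exact_mod_cast hP0
  have hR' : (0 : ℝ) < R := by exact_mod_cast hR0
  have hφ : (0 : ℝ) < R.totient := by exact_mod_cast Nat.totient_pos.2 hR0
  set h : ℝ := N / (P * R) with hh
  have hNh : (N : ℝ) = h * (P * R) := by rw [hh]; field_simp
  have hM : R.totient * (h - 1) ≤ (#(sieved k N P R) : ℝ) := le_card_dvd_coprime k N P R hP0 hR0 hPR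
  obtain ⟨l, hl⟩ : ∃ l : ℝ, l = #L := ⟨_, rfl⟩
  have hh2 : 2000 * (l ^ 2 + 1) ≤ h := by
    rw [hh, le_div_iff₀ (by positivity), hl]; exact_mod_cast hN2
  have hl1 : l ≤ l ^ 2 := by
    rw [hl]; exact_mod_cast Nat.le_self_pow two_ne_zero (#L)
  have hl0 : 0 ≤ l := by rw [hl]; exact Nat.cast_nonneg _
  have hch : ∀ j, ((#L).choose j : ℝ) ≤ l ^ j / j.factorial := fun j => by rw [hl]; exact Nat.choose_le_pow_div j _
  have hc2 : ((#L).choose 2 : ℝ) ≤ l ^ 2 / 2 := by simpa using hch 2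
  have hlev := fun j => card_level_le (k := k) (N := N) hL hP0 hR0 hPR hPL hRL hlam j
  apply dominated_of_levels
  · intro A hA hAn
    set a := #A with ha
    have ha1 : 1 ≤ a := hAn.card_pos
    have hal : (a : ℝ) ≤ l := by rw [hl]; exact_mod_cast card_le_card hA
    have h1 := card_single_le (k := k) (N := N) (A := A) (fun q hq => hL q (hA hq)) hP0 hR0 hPR
      (fun q hq => hPL q (hA hq)) (fun q hq => hRL q (hA hq))
    have h2 := hlev 2
    have s1 : ∑ q ∈ A, 1 / (q : ℝ) ≤ 7 / 10 :=
      (sum_le_sum_of_subset_of_nonneg hA (fun q _ _ => by positivity)).trans hlam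
    have s2 : ∑ q ∈ A, 1 / (q : ℝ) ≤ a * (1 / 14) := by
      rw [ha, ← nsmul_eq_mul]
      apply sum_le_card_nsmul
      intro q hq
      have : (14 : ℝ) ≤ q := by exact_mod_cast hL14 q (hA hq)
      gcongr
    set s := ∑ q ∈ A, 1 / (q : ℝ)
    have hX : ((#{m ∈ sieved k N P R | ∃ q ∈ A, q ∣ m} : ℝ) +
        #{m ∈ sieved k N P R | 2 ≤ #{q ∈ L | q ∣ m}}) ≤ R.totient * (h * (s + 246 / 1000)) := by
      refine (add_le_add h1 h2).trans ?_
      rw [← mul_add]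
      apply mul_le_mul_of_nonneg_left _ hφ.le
      rw [← hh]
      norm_num [Nat.factorial]
      linarith
    -- `246 / 1000` is `(7 / 10) ^ 2 / 2` plus room for the rounding errors. For `a ≤ 4` the bound
    -- `s ≤ a / 14` is used, and for `a ≥ 5` the bound `s ≤ 7 / 10`.
    have hfin : (s + 246 / 1000) * 2 ^ a ≤ 999 / 1000 * (2 ^ a - 1) := by
      rcases lt_or_ge a 5 with h5 | h5
      · interval_cases a <;> norm_num at s2 ⊢ <;> linarith
      · have : (2 : ℝ) ^ 5 ≤ 2 ^ a := pow_le_pow_right₀ (by norm_num) h5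
        nlinarith
    have hpow : (1 : ℝ) ≤ 2 ^ a := one_le_pow₀ (by norm_num)
    have hmain : ((#{m ∈ sieved k N P R | ∃ q ∈ A, q ∣ m} : ℝ) +
        #{m ∈ sieved k N P R | 2 ≤ #{q ∈ L | q ∣ m}}) * 2 ^ a + #(sieved k N P R) ≤
        #(sieved k N P R) * 2 ^ a := by
      have e1 := mul_le_mul_of_nonneg_right hX (by positivity : (0:ℝ) ≤ 2 ^ a)
      have e2 := mul_le_mul_of_nonneg_right hM (sub_nonneg.2 hpow)
      have hh0 : 0 ≤ h := by nlinarith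
      have e3 := mul_le_mul_of_nonneg_left hfin (mul_nonneg hφ.le hh0)
      have e4 : (R.totient : ℝ) * (h * (999 / 1000)) * (2 ^ a - 1) ≤ R.totient * (h - 1) * (2 ^ a - 1) := by
        apply mul_le_mul_of_nonneg_right _ (sub_nonneg.2 hpow)
        apply mul_le_mul_of_nonneg_left _ hφ.le
        nlinarith
      linarith
    exact_mod_cast hmain
  · intro j hj
    suffices hs : (#{m ∈ sieved k N P R | j ≤ #{q ∈ L | q ∣ m}} : ℝ) * 2 ^ j ≤ R.totient * (h - 1) by
      exact_mod_cast hs.trans hM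
    have hl2 : 0 ≤ l ^ 2 := by positivity
    have hf : (0 : ℝ) < j.factorial := by exact_mod_cast j.factorial_pos
    have e14 : (7 / 10 : ℝ) ^ j * 2 ^ j = (14 / 10) ^ j := by rw [← mul_pow]; norm_num
    rcases eq_or_lt_of_le hj with rfl | hj3
    · have := mul_le_mul_of_nonneg_right (hlev 2) (by norm_num : (0:ℝ) ≤ 2 ^ 2)
      refine this.trans ?_
      rw [mul_assoc]
      apply mul_le_mul_of_nonneg_left _ hφ.le
      rw [← hh]
      norm_num [Nat.factorial]
      linarith
    · rcases le_or_gt j J with hjJ | hjJ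
      · refine (mul_le_mul_of_nonneg_right (hlev j) (by positivity : (0:ℝ) ≤ 2 ^ j)).trans ?_
        rw [mul_assoc]
        apply mul_le_mul_of_nonneg_left _ hφ.le
        rw [← hh]
        have h46 : (14 / 10 : ℝ) ^ j / j.factorial ≤ 46 / 100 := by
          rw [div_le_iff₀ hf]
          exact pow_le_factorial _ _ (by norm_num) (by norm_num) 3 (by norm_num)
            (by norm_num [Nat.factorial]) j hj3
        have h4 : ((#L).choose j : ℝ) * 2 ^ j ≤ h / 4 := by
          have hn : (2 * l) ^ j * 4 * (P * R) ≤ j.factorial * N := by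
            rw [hl]; exact_mod_cast hN3 j hj3 hjJ
          have hn' : (2 * l) ^ j * 4 ≤ j.factorial * h := by
            rw [hNh] at hn
            apply le_of_mul_le_mul_right _ (by positivity : (0:ℝ) < P * R)
            linarith
          calc ((#L).choose j : ℝ) * 2 ^ j ≤ l ^ j / j.factorial * 2 ^ j := by gcongr; exact hch j
            _ = (2 * l) ^ j / j.factorial := by rw [mul_pow]; ring
            _ ≤ h / 4 := by rw [div_le_iff₀ hf]; linarith
        have e5 : h * ((7 / 10) ^ j / j.factorial) * 2 ^ j = h * ((14 / 10) ^ j / j.factorial) := by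
          rw [← e14]; ring
        rw [add_mul, e5]
        have := mul_le_mul_of_nonneg_left h46 (by linarith : 0 ≤ h)
        linarith
      · have hc := card_level_le_crude (k := k) (N := N) (R := R) hL hP0 hPL hlam hcr j
        refine (mul_le_mul_of_nonneg_right hc (by positivity : (0:ℝ) ≤ 2 ^ j)).trans ?_
        have hy' : (R : ℝ) ≤ R.totient * y := by exact_mod_cast hy
        have hh0 : 0 ≤ h := by linarith
        calc 3 * (N : ℝ) / P * ((7 / 10) ^ j / j.factorial) * 2 ^ j
            = R * (3 * h * ((14 / 10) ^ j / j.factorial)) := by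
              rw [← e14, hNh]; field_simp
          _ ≤ (R.totient * y) * (3 * h * ((14 / 10) ^ j / j.factorial)) := by gcongr
          _ = R.totient * (h * (3 * y * (14 / 10) ^ j / j.factorial)) := by ring
          _ ≤ R.totient * (h * (99 / 100)) := by
              have := (div_le_iff₀ hf).2 (hJ j hjJ)
              exact mul_le_mul_of_nonneg_left (mul_le_mul_of_nonneg_left this hh0) hφ.le
          _ ≤ _ := by
              apply mul_le_mul_of_nonneg_left _ hφ.le
              linarith

/-- Domination at the small primes `S` not yet revealed together with the large primes `L`, by
induction on `S`. `W` is the product of all small primes. -/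
theorem dominated_sieved {k N W y J : ℕ} {L : Finset ℕ} (hL : ∀ q ∈ L, q.Prime)
    (hL14 : ∀ q ∈ L, 14 ≤ q) (hWL : ∀ q ∈ L, W.Coprime q)
    (hlam : ∑ q ∈ L, (1 / (q : ℝ)) ≤ 7 / 10)
    (hcr : ∀ d, d ∣ W * ∏ q ∈ L, q → d * #{x ∈ Ico k (k + N) | d ∣ x} ≤ 3 * N)
    (hy : ∀ R, R ∣ W → R ≤ R.totient * y)
    (hN2 : 2000 * (#L ^ 2 + 1) * W ≤ N)
    (hN3 : ∀ j, 3 ≤ j → j ≤ J → (2 * #L) ^ j * 4 * W ≤ j.factorial * N)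
    (hJ : ∀ j, J < j → 3 * (y : ℝ) * (14 / 10) ^ j ≤ 99 / 100 * j.factorial)
    (hW : 0 < W) (hWsq : Squarefree W) (S : Finset ℕ) (hS : ∀ p ∈ S, p.Prime) (hS3 : ∀ p ∈ S, 3 ≤ p) :
    ∀ P R : ℕ, P * R * ∏ p ∈ S, p = W → Dominated (sieved k N P R) (S ∪ L) := by
  induction S using Finset.induction_on with
  | empty =>
    intro P R hPRW
    simp only [prod_empty, mul_one] at hPRW
    have hP : P ∣ W := ⟨R, hPRW.symm⟩
    have hR : R ∣ W := ⟨P, by rw [mul_comm]; exact hPRW.symm⟩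
    rw [empty_union]
    refine dominated_sieved_base (y := y) (J := J) hL hL14 (Nat.pos_of_dvd_of_pos hP hW)
      (Nat.pos_of_dvd_of_pos hR hW) ?_ (fun q hq => (hWL q hq).coprime_dvd_left hP)
      (fun q hq => (hWL q hq).coprime_dvd_left hR) hlam ?_ (hy R hR) (by rw [hPRW]; exact hN2)
      (by rw [hPRW]; exact hN3) hJ
    · rw [← hPRW] at hWsq
      exact (Nat.coprime_of_squarefree_mul hWsq).symm
    · intro T hT
      apply hcr
      exact mul_dvd_mul hP (prod_dvd_prod_of_subset _ _ _ hT)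
  | insert p S hpS ih =>
    intro P R hPRW
    rw [prod_insert hpS] at hPRW
    have hp : p.Prime := hS p (mem_insert_self _ _)
    have hp3 : 3 ≤ p := hS3 p (mem_insert_self _ _)
    have ih' := ih (fun q hq => hS q (mem_insert_of_mem hq)) (fun q hq => hS3 q (mem_insert_of_mem hq))
    have hPR : P * (R * p) ∣ W := ⟨∏ x ∈ S, x, by rw [← hPRW]; ring⟩
    have hsq := hWsq.squarefree_of_dvd hPR
    have c1 : P.Coprime (R * p) := Nat.coprime_of_squarefree_mul hsq
    have c2 : R.Coprime p := Nat.coprime_of_squarefree_mul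
      (hsq.squarefree_of_dvd (dvd_mul_left _ _))
    have c3 : P.Coprime R := c1.coprime_dvd_right (dvd_mul_right _ _)
    have c4 : P.Coprime p := c1.coprime_dvd_right (dvd_mul_left _ _)
    have hP0 : 0 < P := Nat.pos_of_dvd_of_pos ((dvd_mul_right _ _).trans hPR) hW
    have hR0 : 0 < R := Nat.pos_of_dvd_of_pos
      (((dvd_mul_right _ _).trans (dvd_mul_left (R * p) P)).trans hPR) hW
    have f1 : {m ∈ sieved k N P R | p ∣ m} = sieved k N (P * p) R := by
      have := sieved_filter_dvd k N P R {p} (by simpa using hp) (by simpa using c4)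
      simpa using this
    have f0 : {m ∈ sieved k N P R | ¬ p ∣ m} = sieved k N P (R * p) := by
      ext x
      simp only [sieved, mem_filter, Nat.coprime_mul_iff_left, hp.coprime_iff_not_dvd]
      tauto
    rw [insert_union]
    by_cases hpL : p ∈ S ∪ L
    · exfalso
      rcases mem_union.1 hpL with h | h
      · exact hpS h
      · have := hWL p h
        have hpW : p ∣ W := (((dvd_mul_left p R).trans (dvd_mul_left _ P))).trans hPR
        have := Nat.Coprime.eq_one_of_dvd this.symm hpW
        omega
    apply Dominated.insert_prime hpL
    · rw [f1, f0]
      have hp0 : 0 < p := hp.pos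
      have u := card_dvd_coprime_le k N (P * p) R (by positivity) hR0 (c3.symm.mul_right c2)
      have v := le_card_dvd_coprime k N P (R * p) hP0 (by positivity) c1.symm
      rw [Nat.totient_mul c2, Nat.totient_prime hp] at v
      have hp' : (3 : ℝ) ≤ p := by exact_mod_cast hp3
      have hsub : ((p - 1 : ℕ) : ℝ) = p - 1 := by rw [Nat.cast_sub hp.one_le]; simp
      push_cast at u v
      rw [hsub] at v
      have hP' : (0 : ℝ) < P := by exact_mod_cast hP0
      have hR' : (0 : ℝ) < R := by exact_mod_cast hR0
      have e1 : (N : ℝ) / (P * p * R) = N / (P * (R * p)) := by congr 1; ring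
      rw [e1] at u
      set h := (N : ℝ) / (P * (R * p)) with hh
      -- With `h ≥ 3` and `p ≥ 3`, `h + 1 ≤ 2 * (h - 1) ≤ (p - 1) * (h - 1)`.
      have h3 : 3 ≤ h := by
        rw [hh, le_div_iff₀ (by positivity)]
        have h5 := Nat.le_of_dvd hW hPR
        have : 3 * (P * (R * p)) ≤ N := by nlinarith
        exact_mod_cast this
      have hφ : (0 : ℝ) ≤ R.totient := by positivity
      have : (R.totient : ℝ) * (h + 1) ≤ R.totient * (p - 1) * (h - 1) := by
        rw [mul_assoc]
        apply mul_le_mul_of_nonneg_left _ hφ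
        nlinarith
      exact_mod_cast (u.trans this).trans v
    · rw [f1]; exact ih' _ _ (by rw [← hPRW]; ring)
    · rw [f0]; exact ih' _ _ (by rw [← hPRW]; ring)

/-! ### Sums of reciprocals of large primes -/

/-- If `C` contains every element of `L` below `X` and has all its elements in `(0, X]`, replacing `L \ C` by
elements of `C \ L` only increases reciprocals. -/
theorem sum_inv_le_of_card_le {L C : Finset ℕ} {X : ℕ} (hX : 0 < X) (hcard : #L ≤ #C)
    (hC : ∀ x ∈ C, 0 < x ∧ x ≤ X) (hLC : ∀ q ∈ L, q ∉ C → X ≤ q) :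
    ∑ q ∈ L, 1 / (q : ℝ) ≤ ∑ x ∈ C, 1 / (x : ℝ) := by
  rw [← sum_inter_add_sum_sdiff L C, ← sum_inter_add_sum_sdiff C L, inter_comm C L]
  gcongr 1
  have hX' : (0 : ℝ) < X := by exact_mod_cast hX
  have h1 : #(L \ C) ≤ #(C \ L) := by
    have a := card_sdiff_add_card_inter L C
    have b := card_sdiff_add_card_inter C L
    rw [inter_comm C L] at b
    omega
  calc ∑ q ∈ L \ C, 1 / (q : ℝ) ≤ #(L \ C) • (1 / (X : ℝ)) := by
        apply sum_le_card_nsmul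
        intro q hq
        rw [mem_sdiff] at hq
        have : (X : ℝ) ≤ q := by exact_mod_cast hLC q hq.1 hq.2
        gcongr
    _ ≤ #(C \ L) • (1 / (X : ℝ)) := by gcongr
    _ ≤ _ := by
        apply card_nsmul_le_sum
        intro x hx
        rw [mem_sdiff] at hx
        have h0 := hC x hx.1
        have h2 : (0 : ℝ) < x := by exact_mod_cast h0.1
        have : (x : ℝ) ≤ X := by exact_mod_cast h0.2
        gcongr

/-- For the integers `x` in `(y, y + n]` coprime to `V`: their number, and an upper bound for
`10 ^ 6 * ∑ 1 / x`, each term being rounded up to an integer. -/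
def wheelStats (V : ℕ) (y : ℕ) : ℕ → ℕ × ℕ
  | 0 => (0, 0)
  | n + 1 =>
    let r := wheelStats V y n
    if Nat.gcd V (y + 1 + n) = 1 then (r.1 + 1, r.2 + (10 ^ 6 / (y + 1 + n) + 1)) else r

theorem wheelStats_spec (V y n : ℕ) :
    (wheelStats V y n).1 = #{x ∈ Ico (y + 1) (y + 1 + n) | V.Coprime x} ∧
    ∑ x ∈ Ico (y + 1) (y + 1 + n) with V.Coprime x, 1 / (x : ℝ) ≤ (wheelStats V y n).2 / 10 ^ 6 := by
  induction n with
  | zero => simp [wheelStats]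
  | succ n ih =>
    have hins : Ico (y + 1) (y + 1 + (n + 1)) = insert (y + 1 + n) (Ico (y + 1) (y + 1 + n)) := by
      ext x; simp only [mem_Ico, mem_insert]; omega
    have hnot : y + 1 + n ∉ {x ∈ Ico (y + 1) (y + 1 + n) | V.Coprime x} := by simp
    rw [hins, filter_insert, wheelStats]
    by_cases h : V.Coprime (y + 1 + n)
    · simp only [if_pos h]
      rw [card_insert_of_notMem hnot, sum_insert hnot]
      refine ⟨by rw [ih.1], ?_⟩
      have hx : (0 : ℝ) < ((y + 1 + n : ℕ) : ℝ) := by positivity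
      have hq : (1 : ℝ) / ((y + 1 + n : ℕ) : ℝ) ≤ ((10 ^ 6 / (y + 1 + n) + 1 : ℕ) : ℝ) / 10 ^ 6 := by
        rw [div_le_div_iff₀ hx (by positivity)]
        have := Nat.lt_mul_div_succ (10 ^ 6) (by omega : 0 < y + 1 + n)
        have h3 : 1 * 10 ^ 6 ≤ (10 ^ 6 / (y + 1 + n) + 1) * (y + 1 + n) := by
          rw [mul_comm (_ + 1)]; omega
        exact_mod_cast h3
      calc _ ≤ ((10 ^ 6 / (y + 1 + n) + 1 : ℕ) : ℝ) / 10 ^ 6 + (wheelStats V y n).2 / 10 ^ 6 :=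
            add_le_add hq ih.2
        _ = _ := by push_cast; ring
    · simp only [if_neg h]
      exact ih

/-- Among `K` primes above `y`, the reciprocal sum is at most that of the first `K` or more integers
above `y` that are coprime to the primes up to `y`. -/
theorem sum_inv_le_of_wheelStats {V y n K : ℕ} (hV : ∀ q : ℕ, q.Prime → y < q → V.Coprime q)
    (h1 : K ≤ (wheelStats V y n).1) (h2 : (wheelStats V y n).2 ≤ 7 * 10 ^ 5)
    (L : Finset ℕ) (hL : ∀ q ∈ L, q.Prime) (hLy : ∀ q ∈ L, y < q) (hLK : #L ≤ K) :
    ∑ q ∈ L, 1 / (q : ℝ) ≤ 7 / 10 := by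
  have hs := wheelStats_spec V y n
  rw [hs.1] at h1
  have h3 : ∑ q ∈ L, 1 / (q : ℝ) ≤ ∑ x ∈ Ico (y + 1) (y + 1 + n) with V.Coprime x, 1 / (x : ℝ) := by
    apply sum_inv_le_of_card_le (X := y + 1 + n) (by omega) (hLK.trans h1)
    · intro x hx
      rw [mem_filter, mem_Ico] at hx
      omega
    · intro q hq hqC
      by_contra hlt
      apply hqC
      rw [mem_filter, mem_Ico]
      exact ⟨⟨hLy q hq, by omega⟩, hV q (hL q hq) (hLy q hq)⟩
  have h4 : ((wheelStats V y n).2 : ℝ) ≤ 7 * 10 ^ 5 := by exact_mod_cast h2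
  refine (h3.trans hs.2).trans ?_
  rw [div_le_iff₀ (by positivity)]
  linarith

theorem primorial_coprime {y q : ℕ} (hq : q.Prime) (h : y < q) : (primorial y).Coprime q := by
  rw [primorial]
  apply Nat.Coprime.prod_left
  intro p hp
  rw [mem_filter, mem_range] at hp
  exact (Nat.coprime_primes hp.2 hq).2 (by omega)

theorem primorial_13 : primorial 13 = 30030 := by decide
theorem primorial_19 : primorial 19 = 9699690 := by decide +kernel
theorem primorial_37 : primorial 37 = 7420738134810 := by decide +kernel

theorem stats13 : 66 ≤ (wheelStats 30030 13 336).1 ∧ (wheelStats 30030 13 336).2 ≤ 7 * 10 ^ 5 := by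
  decide +kernel
theorem stats19 : 122 ≤ (wheelStats 9699690 19 694).1 ∧ (wheelStats 9699690 19 694).2 ≤ 7 * 10 ^ 5 := by
  decide +kernel
theorem stats37 : 290 ≤ (wheelStats 7420738134810 37 1936).1 ∧
    (wheelStats 7420738134810 37 1936).2 ≤ 7 * 10 ^ 5 := by
  decide +kernel

/-- The density of integers coprime to `30` is `4 / 15`. -/
theorem card_coprime_thirty (k n : ℕ) : 15 * #{x ∈ Ico k (k + n) | Nat.Coprime 30 x} ≤ 4 * n + 24 := by
  have hper : Function.Periodic (Nat.Coprime 30) 30 := Nat.periodic_coprime 30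
  have hfin : ∀ a < 30, ∀ b < 30, 15 * #{x ∈ Ico a (a + b) | Nat.Coprime 30 x} ≤ 4 * b + 24 := by
    decide +kernel
  have hcount : Nat.count (Nat.Coprime 30) 30 = 8 := by decide +kernel
  have hshift : #{x ∈ Ico k (k + n % 30) | Nat.Coprime 30 x} =
      #{x ∈ Ico (k % 30) (k % 30 + n % 30) | Nat.Coprime 30 x} := by
    symm
    apply card_bij (fun x _ => x + 30 * (k / 30))
    · intro x hx
      simp only [mem_filter, mem_Ico] at hx ⊢
      refine ⟨by omega, ?_⟩
      have := hx.2
      simpa using this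
    · intro x _ y _ h; omega
    · intro x hx
      simp only [mem_filter, mem_Ico] at hx
      refine ⟨x - 30 * (k / 30), ?_, by omega⟩
      simp only [mem_filter, mem_Ico]
      refine ⟨by omega, ?_⟩
      have h1 : x = (x - 30 * (k / 30)) + 30 * (k / 30) := by omega
      have h2 := hx.2
      rw [h1] at h2
      simpa using h2
  have hsplit : Ico k (k + n) = Ico k (k + n % 30) ∪ Ico (k + n % 30) (k + n % 30 + 30 * (n / 30)) := by
    rw [Ico_union_Ico_eq_Ico (by omega) (by omega)]; congr 1; omega
  have h1 := card_Ico_mul_of_periodic (Nat.Coprime 30) 30 (k + n % 30) (n / 30) hper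
  have h2 := hfin (k % 30) (by omega) (n % 30) (by omega)
  have h3 : #{x ∈ Ico k (k + n) | Nat.Coprime 30 x} ≤
      #{x ∈ Ico k (k + n % 30) | Nat.Coprime 30 x} +
      #{x ∈ Ico (k + n % 30) (k + n % 30 + 30 * (n / 30)) | Nat.Coprime 30 x} := by
    rw [hsplit, filter_union]; exact card_union_le _ _
  rw [h1, hcount, hshift] at h3
  omega

/-- The `i`-th element of `L` is at least `y - 6 + 15 / 4 * i` because it is coprime to `30`; the sum
of reciprocals is compared with an integral, one element at a time from the top. -/
theorem sum_inv_le_log (y : ℕ) (hy : 7 ≤ y) (L : Finset ℕ) (hL : ∀ q ∈ L, q.Prime) (hLy : ∀ q ∈ L, y < q) :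
    ∑ q ∈ L, 1 / (q : ℝ) ≤ 4 / 15 * (Real.log (y - 6 + 15 / 4 * #L) - Real.log (y - 6)) := by
  induction L using Finset.induction_on_max with
  | empty => simp
  | insert q L hmax ih =>
    have hq : q ∉ L := fun h => lt_irrefl _ (hmax q h)
    have ih' := ih (fun x hx => hL x (mem_insert_of_mem hx)) (fun x hx => hLy x (mem_insert_of_mem hx))
    have hyq := hLy q (mem_insert_self _ _)
    have hcop : ∀ x ∈ insert q L, Nat.Coprime 30 x := by
      intro x hx
      have h1 := hLy x hx
      have h2 := hL x hx
      rw [Nat.coprime_comm, h2.coprime_iff_not_dvd]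
      intro hd
      have : x ∣ 2 * 3 * 5 := by simpa using hd
      rcases (h2.dvd_mul).1 this with h | h
      · rcases (h2.dvd_mul).1 h with h | h
        · have := Nat.le_of_dvd (by norm_num) h; omega
        · have := Nat.le_of_dvd (by norm_num) h; omega
      · have := Nat.le_of_dvd (by norm_num) h; omega
    have hsub : insert q L ⊆ {x ∈ Ico (y + 1) (y + 1 + (q - y)) | Nat.Coprime 30 x} := by
      intro x hx
      rw [mem_filter, mem_Ico]
      refine ⟨⟨hLy x hx, ?_⟩, hcop x hx⟩
      rcases mem_insert.1 hx with rfl | h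
      · omega
      · have := hmax x h; omega
    have hc := card_le_card hsub
    rw [card_insert_of_notMem hq] at hc
    have h30 := card_coprime_thirty (y + 1) (q - y)
    have h15 : 15 * (#L + 1) + 4 * y ≤ 4 * q + 24 := by omega
    have h15' : (15 : ℝ) * (#L + 1) + 4 * y ≤ 4 * q + 24 := by exact_mod_cast h15
    have hy' : (7 : ℝ) ≤ y := by exact_mod_cast hy
    rw [sum_insert hq, card_insert_of_notMem hq]
    push_cast
    have hl0 : (0 : ℝ) ≤ #L := Nat.cast_nonneg _
    set B : ℝ := y - 6 + 15 / 4 * #L with hB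
    have hB0 : 0 < B := by rw [hB]; linarith
    have hB1 : (y : ℝ) - 6 + 15 / 4 * (#L + 1) = B + 15 / 4 := by rw [hB]; ring
    rw [hB1]
    have hqB : B + 15 / 4 ≤ q := by rw [hB]; linarith
    have hlog : 15 / 4 * (1 / (q : ℝ)) ≤ Real.log (B + 15 / 4) - Real.log B := by
      rw [← Real.log_div (by positivity) (by positivity)]
      have := Real.one_sub_inv_le_log_of_pos (x := (B + 15 / 4) / B) (by positivity)
      refine le_trans ?_ this
      have h1 : 1 - ((B + 15 / 4) / B)⁻¹ = 15 / 4 * (1 / (B + 15 / 4)) := by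
        field_simp; ring
      rw [h1]
      gcongr
    linarith

theorem sum_inv_le_large {K : ℕ} (hK : 280 ≤ K) (L : Finset ℕ) (hL : ∀ q ∈ L, q.Prime)
    (hLy : ∀ q ∈ L, K / 3 < q) (hLK : #L ≤ K) : ∑ q ∈ L, 1 / (q : ℝ) ≤ 7 / 10 := by
  refine (sum_inv_le_log (K / 3) (by omega) L hL hLy).trans ?_
  set y := K / 3 with hy
  have h1 : K ≤ 3 * y + 2 := by omega
  have h1' : (K : ℝ) ≤ 3 * y + 2 := by exact_mod_cast h1
  have h2 : (93 : ℝ) ≤ y := by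
    have : 93 ≤ y := by omega
    exact_mod_cast this
  have h3 : (#L : ℝ) ≤ K := by exact_mod_cast hLK
  have hl0 : (0 : ℝ) ≤ #L := Nat.cast_nonneg _
  have hA : (0 : ℝ) < y - 6 := by linarith
  have hlog : Real.log (y - 6 + 15 / 4 * #L) - Real.log (y - 6) ≤ 21 / 8 := by
    rw [← Real.log_div (by positivity) hA.ne', Real.log_le_iff_le_exp (by positivity)]
    have hr : ((y : ℝ) - 6 + 15 / 4 * #L) / (y - 6) ≤ 135 / 10 := by
      rw [div_le_iff₀ hA]; linarith
    refine hr.trans ?_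
    have he : Real.exp (21 / 8) ^ 8 = Real.exp 1 ^ 21 := by
      rw [← Real.exp_nat_mul, ← Real.exp_nat_mul]; norm_num
    refine le_of_pow_le_pow_left₀ (n := 8) (by norm_num) (Real.exp_pos _).le ?_
    rw [he]
    calc (135 / 10 : ℝ) ^ 8 ≤ (2.7182 : ℝ) ^ 21 := by norm_num
      _ ≤ _ := by
        have := Real.exp_one_gt_d9
        gcongr
        linarith
  linarith

/-! ### Choice of parameters -/

theorem mem_of_prime_dvd_prod {S : Finset ℕ} (hS : ∀ p ∈ S, p.Prime) {q : ℕ} (hq : q.Prime)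
    (h : q ∣ ∏ p ∈ S, p) : q ∈ S := by
  obtain ⟨p, hp, hqp⟩ := (hq.prime.dvd_finsetProd_iff _).1 h
  rwa [(Nat.prime_dvd_prime_iff_eq hq (hS p hp)).1 hqp]

theorem squarefree_prod_primes {S : Finset ℕ} (hS : ∀ p ∈ S, p.Prime) :
    Squarefree (∏ p ∈ S, p) := by
  apply Finset.squarefree_prod_of_pairwise_isCoprime
  · intro p hp q hq hpq
    exact Nat.coprime_iff_isRelPrime.1 ((Nat.coprime_primes (hS p hp) (hS q hq)).2 hpq)
  · intro p hp
    exact (hS p hp).prime.squarefree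

/-- Domination on an interval of length `2 ^ #G`, with the primes of `G` split at `y`. `V` bounds the
product of the small ones. -/
theorem dominated_of_params {k y J V : ℕ} {G : Finset ℕ} (hG : ∀ p ∈ G, p.Prime)
    (hG3 : ∀ p ∈ G, 3 ≤ p) (hy : 13 ≤ y) (hV : primorial y ≤ V)
    (hlam : ∑ q ∈ G with y < q, (1 / (q : ℝ)) ≤ 7 / 10)
    (hcr : ∀ d, d ∣ ∏ q ∈ G, q → d * #{x ∈ Ico k (k + 2 ^ #G) | d ∣ x} ≤ 3 * 2 ^ #G)
    (hN2 : 2000 * (#G ^ 2 + 1) * V ≤ 2 ^ #G)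
    (hN3 : ∀ j, 3 ≤ j → j ≤ J → (2 * #G) ^ j * 4 * V ≤ j.factorial * 2 ^ #G)
    (hJ : ∀ j, J < j → 3 * (y : ℝ) * (14 / 10) ^ j ≤ 99 / 100 * j.factorial) :
    Dominated (Ico k (k + 2 ^ #G)) G := by
  set S := {p ∈ G | ¬ y < p} with hSdef
  set L := {p ∈ G | y < p} with hLdef
  have hS : ∀ p ∈ S, p.Prime := fun p hp => hG p (mem_filter.1 hp).1
  have hL : ∀ p ∈ L, p.Prime := fun p hp => hG p (mem_filter.1 hp).1
  have hprod : (∏ p ∈ S, p) * ∏ q ∈ L, q = ∏ q ∈ G, q := by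
    rw [mul_comm]; exact prod_filter_mul_prod_filter_not _ _ _
  have hWV : ∏ p ∈ S, p ≤ V := by
    refine le_trans ?_ hV
    rw [primorial]
    apply prod_le_prod_of_subset_of_one_le'
    · intro p hp
      have := mem_filter.1 hp
      rw [mem_filter, mem_range]
      exact ⟨by omega, hG p this.1⟩
    · intro p hp _
      exact (mem_filter.1 hp).2.one_le
  have hLG : #L ≤ #G := card_filter_le _ _
  have h := dominated_sieved (k := k) (N := 2 ^ #G) (W := ∏ p ∈ S, p) (y := y) (J := J) hL
    (fun q hq => by have := (mem_filter.1 hq).2; omega)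
    (fun q hq => by
      apply Nat.Coprime.prod_left
      intro p hp
      refine (Nat.coprime_primes (hS p hp) (hL q hq)).2 ?_
      rintro rfl
      exact (mem_filter.1 hp).2 (mem_filter.1 hq).2)
    hlam (by rwa [hprod])
    (fun R hR => le_totient_mul R y (by omega) fun p hp => by
      have hp' := Nat.prime_of_mem_primeFactors hp
      have := mem_of_prime_dvd_prod hS hp' ((Nat.dvd_of_mem_primeFactors hp).trans hR)
      have := (mem_filter.1 this).2
      omega)
    (le_trans (by gcongr) hN2)
    (fun j h3 hj => le_trans (by gcongr) (hN3 j h3 hj))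
    hJ (prod_pos fun p hp => (hS p hp).pos) (squarefree_prod_primes hS) S hS
    (fun p hp => hG3 p (mem_filter.1 hp).1) 1 1 (by simp)
  have h1 : sieved k (2 ^ #G) 1 1 = Ico k (k + 2 ^ #G) := by
    simp [sieved]
  have h2 : S ∪ L = G := by
    rw [union_comm]; exact filter_union_filter_not_eq _ _
  rwa [h1, h2] at h

/-- The size conditions on `2 ^ K` for the cut-off `13`; the next two lemmas are the analogues for `19`
and `37`. -/
theorem numeric13 : ∀ K, 44 ≤ K → K < 67 → 2000 * (K ^ 2 + 1) * 30030 ≤ 2 ^ K ∧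
    ∀ j, j < 6 → 3 ≤ j → (2 * K) ^ j * 4 * 30030 ≤ j.factorial * 2 ^ K := by
  have h : ∀ i < 23, 2000 * ((44 + i) ^ 2 + 1) * 30030 ≤ 2 ^ (44 + i) ∧
    ∀ j < 6, 3 ≤ j → (2 * (44 + i)) ^ j * 4 * 30030 ≤ j.factorial * 2 ^ (44 + i) := by
    decide +kernel
  intro K h1 h2
  obtain ⟨i, rfl⟩ := Nat.exists_eq_add_of_le h1
  exact h i (by omega)

theorem numeric19 : ∀ K, 67 ≤ K → K < 123 → 2000 * (K ^ 2 + 1) * 9699690 ≤ 2 ^ K ∧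
    ∀ j, j < 6 → 3 ≤ j → (2 * K) ^ j * 4 * 9699690 ≤ j.factorial * 2 ^ K := by
  have h : ∀ i < 56, 2000 * ((67 + i) ^ 2 + 1) * 9699690 ≤ 2 ^ (67 + i) ∧
    ∀ j < 6, 3 ≤ j → (2 * (67 + i)) ^ j * 4 * 9699690 ≤ j.factorial * 2 ^ (67 + i) := by
    decide +kernel
  intro K h1 h2
  obtain ⟨i, rfl⟩ := Nat.exists_eq_add_of_le h1
  exact h i (by omega)

theorem numeric37 : ∀ K, 123 ≤ K → K < 291 → 2000 * (K ^ 2 + 1) * 7420738134810 ≤ 2 ^ K ∧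
    ∀ j, j < 7 → 3 ≤ j → (2 * K) ^ j * 4 * 7420738134810 ≤ j.factorial * 2 ^ K := by
  have h : ∀ i < 168, 2000 * ((123 + i) ^ 2 + 1) * 7420738134810 ≤ 2 ^ (123 + i) ∧
    ∀ j < 7, 3 ≤ j →
      (2 * (123 + i)) ^ j * 4 * 7420738134810 ≤ j.factorial * 2 ^ (123 + i) := by
    decide +kernel
  intro K h1 h2
  obtain ⟨i, rfl⟩ := Nat.exists_eq_add_of_le h1
  exact h i (by omega)

/-- The condition on the levels above `J` follows from its case `J + 1`. -/
theorem level_tail {y J : ℕ} (h0 : 0 < y)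
    (h : (14 / 10 : ℝ) ^ (J + 1) ≤ 99 / 100 / (3 * y) * (J + 1).factorial) (j : ℕ) (hj : J < j) :
    3 * (y : ℝ) * (14 / 10) ^ j ≤ 99 / 100 * j.factorial := by
  have hy : (0 : ℝ) < y := by exact_mod_cast h0
  have hJ0 : (0 : ℝ) ≤ J := Nat.cast_nonneg _
  have := pow_le_factorial (14 / 10) (99 / 100 / (3 * y)) (by norm_num) (by positivity) (J + 1)
    (by push_cast; linarith) h j hj
  calc 3 * (y : ℝ) * (14 / 10) ^ j ≤ 3 * y * (99 / 100 / (3 * y) * j.factorial) := by gcongr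
    _ = _ := by field_simp

theorem two_pow_quad (y : ℕ) (hy : 93 ≤ y) : 2000 * ((3 * y + 2) ^ 2 + 1) ≤ 2 ^ y := by
  induction y, hy using Nat.le_induction with
  | base => norm_num
  | succ y hy ih => rw [pow_succ 2]; nlinarith

theorem two_pow_quad' (J : ℕ) (hJ : 9 ≤ J) : 3 * ((J + 2) * J + 3) ≤ 2 ^ J := by
  induction J, hJ using Nat.le_induction with
  | base => norm_num
  | succ y hy ih => rw [pow_succ 2]; nlinarith

/-- Domination on an interval of length `2 ^ #G` for at least `44` odd primes. The hypothesis `hcr` serves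
the levels above `J`, where rounding errors would be too large. -/
theorem dominated_Ico {k : ℕ} {G : Finset ℕ} (hG : ∀ p ∈ G, p.Prime)
    (hG3 : ∀ p ∈ G, 3 ≤ p) (hK : 44 ≤ #G)
    (hcr : ∀ d, d ∣ ∏ q ∈ G, q → d * #{x ∈ Ico k (k + 2 ^ #G) | d ∣ x} ≤ 3 * 2 ^ #G) :
    Dominated (Ico k (k + 2 ^ #G)) G := by
  have hL : ∀ y, ∀ q ∈ {q ∈ G | y < q}, q.Prime := fun y q hq => hG q (mem_filter.1 hq).1
  have hLy : ∀ y, ∀ q ∈ {q ∈ G | y < q}, y < q := fun y q hq => (mem_filter.1 hq).2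
  have hLG : ∀ y, #{q ∈ G | y < q} ≤ #G := fun y => card_filter_le _ _
  rcases lt_or_ge #G 67 with h67 | h67
  · have hn := numeric13 _ hK h67
    refine dominated_of_params (y := 13) (J := 5) hG hG3 le_rfl primorial_13.le ?_ hcr hn.1
      (fun j h3 hj => hn.2 j (by omega) h3) (level_tail (by norm_num) ?_)
    · exact sum_inv_le_of_wheelStats (V := 30030) (fun q hq h => primorial_13 ▸ primorial_coprime hq h)
        stats13.1 stats13.2 _ (hL _) (hLy _) ((hLG _).trans (by omega))
    · norm_num [Nat.factorial]
  rcases lt_or_ge #G 123 with h123 | h123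
  · have hn := numeric19 _ h67 h123
    refine dominated_of_params (y := 19) (J := 5) hG hG3 (by norm_num) primorial_19.le ?_ hcr hn.1
      (fun j h3 hj => hn.2 j (by omega) h3) (level_tail (by norm_num) ?_)
    · exact sum_inv_le_of_wheelStats (V := 9699690) (fun q hq h => primorial_19 ▸ primorial_coprime hq h)
        stats19.1 stats19.2 _ (hL _) (hLy _) ((hLG _).trans (by omega))
    · norm_num [Nat.factorial]
  rcases lt_or_ge #G 291 with h291 | h291
  · have hn := numeric37 _ h123 h291
    refine dominated_of_params (y := 37) (J := 6) hG hG3 (by norm_num) primorial_37.le ?_ hcr hn.1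
      (fun j h3 hj => hn.2 j (by omega) h3) (level_tail (by norm_num) ?_)
    · exact sum_inv_le_of_wheelStats (V := 7420738134810)
        (fun q hq h => primorial_37 ▸ primorial_coprime hq h)
        stats37.1 stats37.2 _ (hL _) (hLy _) ((hLG _).trans (by omega))
    · norm_num [Nat.factorial]
  · set K := #G with hKdef
    set y := K / 3 with hydef
    set J := Nat.log 2 K with hJdef
    have hy : 93 ≤ y := by omega
    have hK1 : 3 * y ≤ K := by omega
    have hK2 : K ≤ 3 * y + 2 := by omega
    have hJ1 : 2 ^ J ≤ K := Nat.pow_log_le_self 2 (by omega)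
    have hJ2 : K < 2 ^ (J + 1) := Nat.lt_pow_succ_log_self (by norm_num) K
    have hJ8 : 8 ≤ J := Nat.le_log_of_pow_le (by norm_num) (by omega)
    have hJy : (J + 2) * J + 2 ≤ y := by
      rcases Nat.lt_or_ge J 9 with h | h
      · have : J = 8 := by omega
        rw [this]; omega
      · have := two_pow_quad' J h
        omega
    have hpow : 4 ^ y * 2 ^ y ≤ 2 ^ K := by
      rw [show (4 : ℕ) = 2 ^ 2 by norm_num, ← pow_mul, ← pow_add]
      exact Nat.pow_le_pow_right (by norm_num) (by omega)
    refine dominated_of_params (y := y) (J := J) hG hG3 (by omega) (primorial_le_four_pow y)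
      (sum_inv_le_large (K := K) (by omega) _ (hL _) (hLy _) (hLG _)) hcr ?_ ?_ ?_
    · have := two_pow_quad y hy
      calc 2000 * (K ^ 2 + 1) * 4 ^ y ≤ 2000 * ((3 * y + 2) ^ 2 + 1) * 4 ^ y := by gcongr
        _ ≤ 2 ^ y * 4 ^ y := by gcongr
        _ ≤ _ := by rwa [mul_comm]
    · intro j _ hj
      have h1 : (2 * K) ^ j * 4 ≤ 2 ^ y := by
        have h2 : 2 * K ≤ 2 ^ (J + 2) := by rw [pow_succ]; omega
        have h3 : (2 * K) ^ j ≤ 2 ^ ((J + 2) * J) := by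
          rw [pow_mul]
          exact (Nat.pow_le_pow_left h2 j).trans (Nat.pow_le_pow_right (by positivity) hj)
        calc (2 * K) ^ j * 4 ≤ 2 ^ ((J + 2) * J) * 4 := Nat.mul_le_mul_right 4 h3
          _ = 2 ^ ((J + 2) * J + 2) := by rw [pow_add _ _ 2]; norm_num
          _ ≤ _ := Nat.pow_le_pow_right (by norm_num) hJy
      calc (2 * K) ^ j * 4 * 4 ^ y ≤ 2 ^ y * 4 ^ y := by gcongr
        _ ≤ 2 ^ K := by rwa [mul_comm]
        _ ≤ _ := Nat.le_mul_of_pos_left _ (Nat.factorial_pos _)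
    · intro j hj
      have h1 : 3 * (y : ℝ) ≤ 2 ^ j := by
        have : 3 * y ≤ 2 ^ j :=
          hK1.trans (hJ2.le.trans (Nat.pow_le_pow_right (by norm_num) (by omega)))
        exact_mod_cast this
      calc 3 * (y : ℝ) * (14 / 10) ^ j ≤ 2 ^ j * (14 / 10) ^ j := by gcongr
        _ = (28 / 10) ^ j := by rw [← mul_pow]; norm_num
        _ ≤ _ := pow_le_factorial (28 / 10) (99 / 100) (by norm_num) (by norm_num) 9
            (by norm_num) (by norm_num [Nat.factorial]) j (by omega)

/-! ### From intervals to matchings -/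

theorem mul_card_filter_dvd_le (d n : ℕ) : d * #{x ∈ Icc 1 n | d ∣ x} ≤ n := by
  have h : #{x ∈ Icc 1 n | d ∣ x} = n / d := by
    rw [← Nat.Ioc_filter_dvd_card_eq_div]; rfl
  rw [h]
  exact Nat.mul_div_le n d

theorem dominated_Icc_of_odd {G : Finset ℕ} (hG : ∀ p ∈ G, p.Prime)
    (hG3 : ∀ p ∈ G, 3 ≤ p) (hK : 44 ≤ #G) : Dominated (Icc 1 (2 ^ #G)) G := by
  have hI : Ico 1 (1 + 2 ^ #G) = Icc 1 (2 ^ #G) := by ext x; simp only [mem_Ico, mem_Icc]; omega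
  rw [← hI]
  apply dominated_Ico hG hG3 hK
  intro d _
  rw [hI]
  have := mul_card_filter_dvd_le d (2 ^ #G)
  omega

theorem dominated_Icc_insert_two {G : Finset ℕ} (hG : ∀ p ∈ G, p.Prime)
    (hG3 : ∀ p ∈ G, 3 ≤ p) (hK : 44 ≤ #G) : Dominated (Icc 1 (2 * 2 ^ #G)) (insert 2 G) := by
  have h2G : 2 ∉ G := fun h => by have := hG3 2 h; omega
  set N := 2 ^ #G with hN
  have hbij1 : Set.BijOn (fun m => m / 2) ({m ∈ Icc 1 (2 * N) | 2 ∣ m} : Finset ℕ) (Icc 1 N : Finset ℕ) := by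
    refine ⟨?_, ?_, ?_⟩
    · intro m hm
      simp only [coe_filter, mem_Icc, Set.mem_ofPred_eq, coe_Icc, Set.mem_Icc] at hm ⊢
      omega
    · intro m hm m' hm' h
      simp only [coe_filter, mem_Icc, Set.mem_ofPred_eq] at hm hm' h
      omega
    · intro x hx
      simp only [coe_Icc, Set.mem_Icc] at hx
      refine ⟨2 * x, ?_, by simp⟩
      simp only [coe_filter, mem_Icc, Set.mem_ofPred_eq]
      omega
  have hodd : ∀ p ∈ G, p.Coprime 2 := fun p hp =>
    (Nat.coprime_primes (hG p hp) Nat.prime_two).2 (by have := hG3 p hp; omega)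
  set w := ∏ p ∈ G, p with hw
  have hw2 : w % 2 = 1 := by
    have : w.Coprime 2 := Nat.Coprime.prod_left hodd
    rw [← Nat.odd_iff]
    exact (Nat.coprime_two_right).1 this
  -- For odd `m`, `k + m / 2 = (w + m) / 2`, which has the same odd divisors from `G` as `m`.
  set k := (w + 1) / 2 with hk
  have hbij0 : Set.BijOn (fun m => k + m / 2) ({m ∈ Icc 1 (2 * N) | ¬ 2 ∣ m} : Finset ℕ)
      (Ico k (k + N) : Finset ℕ) := by
    refine ⟨?_, ?_, ?_⟩
    · intro m hm
      simp only [coe_filter, mem_Icc, Set.mem_ofPred_eq, coe_Ico, Set.mem_Ico] at hm ⊢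
      omega
    · intro m hm m' hm' h
      simp only [coe_filter, mem_Icc, Set.mem_ofPred_eq] at hm hm' h
      omega
    · intro x hx
      simp only [coe_Ico, Set.mem_Ico] at hx
      refine ⟨2 * (x - k) + 1, ?_, ?_⟩
      · simp only [coe_filter, mem_Icc, Set.mem_ofPred_eq]
        omega
      · show k + (2 * (x - k) + 1) / 2 = x
        omega
  have hc1 := hbij1.finsetCard_eq
  have hc0 := hbij0.finsetCard_eq
  rw [Nat.card_Icc] at hc1
  rw [Nat.card_Ico] at hc0
  apply Dominated.insert_prime h2G
  · omega
  · refine Dominated.congr (fun m => m / 2) hbij1 ?_ (dominated_Icc_of_odd hG hG3 hK)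
    intro m hm p hp
    have hm2 : m = 2 * (m / 2) := (Nat.mul_div_cancel' (mem_filter.1 hm).2).symm
    show p ∣ m / 2 ↔ p ∣ m
    conv_rhs => rw [hm2]
    exact ((hodd p hp).dvd_mul_left).symm
  · refine Dominated.congr (fun m => k + m / 2) hbij0 ?_ (dominated_Ico hG hG3 hK ?_)
    · intro m hm p hp
      have h1 : 2 * (k + m / 2) = w + m := by
        have := (mem_filter.1 hm).2
        omega
      show p ∣ k + m / 2 ↔ p ∣ m
      rw [← (hodd p hp).dvd_mul_left, h1]
      exact (Nat.dvd_add_right (dvd_prod_of_mem _ hp))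
    · intro d hd
      have hle : #{x ∈ Ico k (k + N) | d ∣ x} ≤ #{x ∈ Icc 1 (2 * N) | d ∣ x} := by
        apply card_le_card_of_injOn (fun x => 2 * x - w)
        · intro x hx
          simp only [coe_filter, mem_Ico, mem_Icc, Set.mem_ofPred_eq] at hx ⊢
          exact ⟨by omega, Nat.dvd_sub (hx.2.mul_left 2) hd⟩
        · intro x hx x' hx' h
          simp only [coe_filter, mem_Ico, Set.mem_ofPred_eq] at hx hx' h
          omega
      calc d * _ ≤ d * _ := Nat.mul_le_mul_left d hle
        _ ≤ 2 * N := mul_card_filter_dvd_le d (2 * N)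
        _ ≤ 3 * N := by omega

theorem dominated_primeFactors {n : ℕ} (h : 45 ≤ #n.primeFactors) :
    Dominated (Icc 1 (2 ^ #n.primeFactors)) n.primeFactors := by
  have hG : ∀ p ∈ n.primeFactors, p.Prime := fun p hp => Nat.prime_of_mem_primeFactors hp
  by_cases h2 : 2 ∈ n.primeFactors
  · have he := dominated_Icc_insert_two (G := n.primeFactors.erase 2)
      (fun p hp => hG p (mem_of_mem_erase hp))
      (fun p hp => by
        have h1 := (hG p (mem_of_mem_erase hp)).two_le
        have h2 := ne_of_mem_erase hp
        omega)
      (by rw [card_erase_of_mem h2]; omega)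
    rw [insert_erase h2] at he
    rwa [← pow_succ', card_erase_add_one h2] at he
  · refine dominated_Icc_of_odd hG (fun p hp => ?_) (by omega)
    have h1 := (hG p hp).two_le
    have h3 : p ≠ 2 := fun h => h2 (h ▸ hp)
    omega

/-- Hall's theorem. For a set `A` of divisors, an `m` with no neighbour in `A` has its pattern in the
up-closed family `U` of sets meeting the prime factors of each `d ∈ A`. The complements of the
prime factor sets of the `d ∈ A` are `#A` sets outside `U`. -/
theorem matchable_of_dominated {n : ℕ} (hn : 0 < n) (hsf : Squarefree n)
    (h : Dominated (Icc 1 (2 ^ #n.primeFactors)) n.primeFactors) : Matchable n := by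
  classical
  set G := n.primeFactors with hG
  have hinj : Set.InjOn (fun d : ℕ => d.primeFactors) (n.divisors : Set ℕ) := by
    intro d hd e he hde
    have hd' := Nat.dvd_of_mem_divisors hd
    have he' := Nat.dvd_of_mem_divisors he
    rw [← Nat.prod_primeFactors_of_squarefree (hsf.squarefree_of_dvd hd'),
      ← Nat.prod_primeFactors_of_squarefree (hsf.squarefree_of_dvd he')]
    simp only at hde
    rw [hde]
  have hsub : ∀ d ∈ n.divisors, d.primeFactors ⊆ G := fun d hd =>
    Nat.primeFactors_mono (Nat.dvd_of_mem_divisors hd) hn.ne'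
  have htau : #n.divisors = 2 ^ #G := by
    rw [← card_powerset]
    apply card_bij (fun d _ => d.primeFactors)
    · intro d hd; exact mem_powerset.2 (hsub d hd)
    · intro d hd e he hde; exact hinj hd he hde
    · intro T hT
      rw [mem_powerset] at hT
      have hTp : ∀ p ∈ T, p.Prime := fun p hp => Nat.prime_of_mem_primeFactors (hT hp)
      refine ⟨∏ p ∈ T, p, ?_, Nat.primeFactors_prod hTp⟩
      rw [Nat.mem_divisors]
      refine ⟨?_, hn.ne'⟩
      rw [← Nat.prod_primeFactors_of_squarefree hsf]
      exact prod_dvd_prod_of_subset _ _ _ hT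
  set t : n.divisors → Finset ℕ := fun d => {m ∈ Icc 1 (2 ^ #G) | Nat.gcd d m = 1} with ht
  have hall : ∀ A : Finset n.divisors, #A ≤ #(A.biUnion t) := by
    intro A
    let U : Finset ℕ → Prop := fun T => ∀ d ∈ A, ∃ p ∈ T, p ∣ (d : ℕ)
    have : DecidablePred U := Classical.decPred U
    have hU : Monotone U := by
      intro T T' hTT' hT d hd
      obtain ⟨p, hp, hpd⟩ := hT d hd
      exact ⟨p, hTT' hp, hpd⟩
    have hdom := h U hU
    have hbad : Icc 1 (2 ^ #G) \ A.biUnion t = {m ∈ Icc 1 (2 ^ #G) | U {p ∈ G | p ∣ m}} := by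
      ext m
      simp only [mem_sdiff, mem_biUnion, mem_filter, not_exists, not_and, ht]
      refine and_congr_right fun hm => forall_congr' fun d => forall_congr' fun hd => ?_
      constructor
      · intro hne
        obtain ⟨p, hp, hpd, hpm⟩ := Nat.Prime.not_coprime_iff_dvd.1 (hne hm)
        refine ⟨p, mem_filter.2 ⟨?_, hpm⟩, hpd⟩
        exact hsub d d.2 (Nat.mem_primeFactors.2 ⟨hp, hpd, (Nat.pos_of_mem_divisors d.2).ne'⟩)
      · rintro ⟨p, hp, hpd⟩ _
        rw [mem_filter] at hp
        exact Nat.Prime.not_coprime_iff_dvd.2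
          ⟨p, Nat.prime_of_mem_primeFactors hp.1, hpd, hp.2⟩
    have hA : #A ≤ #{T ∈ G.powerset | ¬ U T} := by
      apply card_le_card_of_injOn (fun d : n.divisors => G \ (d : ℕ).primeFactors)
      · intro d hd
        simp only [coe_filter, mem_powerset, Set.mem_ofPred_eq]
        refine ⟨sdiff_subset, fun hUd => ?_⟩
        obtain ⟨p, hp, hpd⟩ := hUd d hd
        rw [mem_sdiff] at hp
        exact hp.2 (Nat.mem_primeFactors.2 ⟨Nat.prime_of_mem_primeFactors hp.1, hpd,
          (Nat.pos_of_mem_divisors d.2).ne'⟩)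
      · intro d _ e _ hde
        have h1 : (d : ℕ).primeFactors = (e : ℕ).primeFactors := by
          rw [← Finset.sdiff_sdiff_eq_self (hsub d d.2), ← Finset.sdiff_sdiff_eq_self (hsub e e.2)]
          exact congrArg (fun X => G \ X) hde
        exact Subtype.ext (hinj d.2 e.2 h1)
    have hsplit : #{T ∈ G.powerset | U T} + #{T ∈ G.powerset | ¬ U T} = #G.powerset :=
      card_filter_add_card_filter_not U
    rw [card_powerset] at hsplit
    rw [Nat.card_Icc, Nat.add_sub_cancel, mul_comm] at hdom
    have hdom' := Nat.le_of_mul_le_mul_left hdom (by positivity)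
    have hsd := card_sdiff_add_card_eq_card (s := A.biUnion t) (t := Icc 1 (2 ^ #G))
      (biUnion_subset.2 fun d _ => filter_subset _ _)
    rw [hbad, Nat.card_Icc] at hsd
    omega
  obtain ⟨f, hf, hft⟩ := (Finset.all_card_le_biUnion_card_iff_exists_injective t).1 hall
  refine ⟨fun d => if hd : d ∈ n.divisors then f ⟨d, hd⟩ else 0, ?_, ?_⟩
  · rw [htau]
    have hmaps : Set.MapsTo (fun d => if hd : d ∈ n.divisors then f ⟨d, hd⟩ else 0)
        (n.divisors : Set ℕ) (Icc 1 (2 ^ #G) : Finset ℕ) := by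
      intro d hd
      have hd' : d ∈ n.divisors := hd
      simp only [dif_pos hd']
      exact (mem_filter.1 (hft ⟨d, hd'⟩)).1
    have hinj' : Set.InjOn (fun d => if hd : d ∈ n.divisors then f ⟨d, hd⟩ else 0)
        (n.divisors : Set ℕ) := by
      intro d hd e he hde
      have hd' : d ∈ n.divisors := hd
      have he' : e ∈ n.divisors := he
      simp only [dif_pos hd', dif_pos he'] at hde
      exact congrArg Subtype.val (hf hde)
    exact ⟨hmaps, hinj', surjOn_of_injOn_of_card_le _ hmaps hinj' (by simp [htau])⟩
  · intro d hd
    simp only [dif_pos hd]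
    exact (mem_filter.1 (hft ⟨d, hd⟩)).2

end

theorem stmt_4 (n : ℕ) (hn : 0 < n) (hsf : Squarefree n)
    (hω : 45 ≤ n.primeFactors.card) : Matchable n := by
  exact matchable_of_dominated hn hsf (dominated_primeFactors hω)
end

section
/- Let d be a positive integer and let S be a k-AP combination all of whose constituent arithmetic progressions have common differences coprime to d. Then the number of elements of S divisible by d equals |S|/d + θ for some real number θ with |θ| ≤ k. -/
/-!
The discrepancy of a finite set `S` is `#{x ∈ S : d ∣ x} - #S / d`. It adds up over disjoint
unions and subtracts over differences of nested sets, so by induction on the construction it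
suffices to bound it by `1` for a single progression `{a + i q : i < m}` with `q` coprime to `d`.
There `d ∣ a + i q` holds exactly when `i` lies in one residue class modulo `d`, and such a class
has `⌊m / d⌋` or `⌊m / d⌋ + 1` members below `m`. If `q = 0`, the progression degenerates to at most
one point, but coprimality forces `d = 1` and the discrepancy vanishes.
-/

/-- `IsAPCombination P k S` means the finite set `S` of integers is a `k`-AP combination
all of whose constituent arithmetic progressions have common difference satisfying `P`:
(1) any (possibly empty) finite arithmetic progression with common difference `q`
satisfying `P q` is a 1-AP combination; (2) a disjoint union of a `k₁`-AP combination
and a `k₂`-AP combination is a `(k₁+k₂)`-AP combination; (3) the difference of a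
`k₁`-AP combination and a `k₂`-AP combination contained in it is a
`(k₁+k₂)`-AP combination. -/
inductive IsAPCombination (P : ℤ → Prop) : ℕ → Finset ℤ → Prop
  | ap (a q : ℤ) (m : ℕ) (hq : P q) :
      IsAPCombination P 1 ((Finset.range m).image (fun i : ℕ => a + (i : ℤ) * q))
  | union {k₁ k₂ : ℕ} {S₁ S₂ : Finset ℤ} :
      IsAPCombination P k₁ S₁ → IsAPCombination P k₂ S₂ → Disjoint S₁ S₂ →
      IsAPCombination P (k₁ + k₂) (S₁ ∪ S₂)
  | sdiff {k₁ k₂ : ℕ} {S₁ S₂ : Finset ℤ} :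
      IsAPCombination P k₁ S₁ → IsAPCombination P k₂ S₂ → S₂ ⊆ S₁ →
      IsAPCombination P (k₁ + k₂) (S₁ \ S₂)

/-- For `q` coprime to `d`, the indices `i` with `d ∣ a + i q` form a residue class modulo `d`. -/
lemma exists_dvd_iff_modEq (d : ℕ) (hd : 0 < d) (a q : ℤ) (hq : IsCoprime q (d : ℤ)) :
    ∃ v : ℕ, ∀ i : ℕ, (d : ℤ) ∣ a + (i : ℤ) * q ↔ i ≡ v [MOD d] := by
  obtain ⟨u, w, huw⟩ := hq
  have hd' : (d : ℤ) ≠ 0 := Int.natCast_ne_zero.2 (Nat.pos_iff_ne_zero.1 hd)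
  -- `-a * u` solves the congruence since `u` inverts `q` modulo `d`; reduce it to a natural number.
  refine ⟨((-a * u) % d).toNat, fun i => ?_⟩
  have hv : ((((-a * u) % d).toNat : ℕ) : ℤ) = (-a * u) % d :=
    Int.toNat_of_nonneg (Int.emod_nonneg _ hd')
  rw [← Int.natCast_modEq_iff, hv]
  have hmod : (-a * u) % d ≡ -a * u [ZMOD d] := Int.mod_modEq _ _
  have hiff : (i : ℤ) ≡ (-a * u) % d [ZMOD d] ↔ (d : ℤ) ∣ i + a * u := by
    rw [show (i : ℤ) ≡ (-a * u) % d [ZMOD d] ↔ (-a * u) % d ≡ i [ZMOD d] from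
      ⟨Int.ModEq.symm, Int.ModEq.symm⟩]
    constructor
    · intro h
      have h' := (hmod.symm.trans h).dvd
      have e : (i : ℤ) - -a * u = i + a * u := by ring
      rwa [e] at h'
    · intro h
      refine hmod.trans ((Int.modEq_iff_dvd).2 ?_)
      have e : (i : ℤ) - -a * u = i + a * u := by ring
      rwa [e]
  rw [hiff]
  constructor
  · intro h
    have e : (i : ℤ) + a * u = (a + i * q) * u + d * (i * w) := by
      linear_combination (-(i : ℤ)) * huw
    rw [e]
    exact (h.mul_right u).add (Dvd.intro _ rfl)
  · intro h
    have e : a + (i : ℤ) * q = (i + a * u) * q + d * (a * w) := by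
      linear_combination (-a) * huw
    rw [e]
    exact (h.mul_right q).add (Dvd.intro _ rfl)

/-- A single progression whose difference is coprime to `d` has discrepancy at most `1`. -/
lemma ap_discrepancy (d : ℕ) (hd : 0 < d) (a q : ℤ) (m : ℕ) (hq : IsCoprime q (d : ℤ))
    (S : Finset ℤ) (hS : S = (Finset.range m).image (fun i : ℕ => a + (i : ℤ) * q)) :
    |((S.filter (fun x => (d : ℤ) ∣ x)).card : ℝ) - (S.card : ℝ) / (d : ℝ)| ≤ 1 := by
  rcases eq_or_ne q 0 with rfl | hq0
  · have hd1 : d = 1 := by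
      have := isCoprime_zero_left.1 hq
      simpa [Int.isUnit_iff_natAbs_eq] using this
    subst hd1
    simp
  · have hinj : Function.Injective (fun i : ℕ => a + (i : ℤ) * q) := by
      intro i j h
      simpa [hq0] using h
    obtain ⟨v, hv⟩ := exists_dvd_iff_modEq d hd a q hq
    have hcard : S.card = m := by
      rw [hS, Finset.card_image_of_injective _ hinj, Finset.card_range]
    have hcount : (S.filter (fun x => (d : ℤ) ∣ x)).card
        = m / d + if v % d < m % d then 1 else 0 := by
      rw [hS, Finset.filter_image, Finset.card_image_of_injective _ hinj,
        ← Nat.count_modEq_card m hd v, Nat.count_eq_card_filter_range]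
      simp only [hv]
    rw [hcard, hcount]
    have hdR : (0 : ℝ) < d := by exact_mod_cast hd
    have h1 : ((m / d : ℕ) : ℝ) ≤ (m : ℝ) / d := Nat.cast_div_le
    have h2 : (m : ℝ) / d < ((m / d : ℕ) : ℝ) + 1 := by
      rw [div_lt_iff₀ hdR]
      exact_mod_cast Nat.lt_mul_of_div_lt (Nat.lt_succ_self _) hd
    rw [abs_le]
    split_ifs <;> push_cast <;> constructor <;> linarith

theorem stmt_5 (d : ℕ) (hd : 0 < d) (k : ℕ) (S : Finset ℤ)
    (hS : IsAPCombination (fun q => IsCoprime q (d : ℤ)) k S) :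
    ∃ θ : ℝ, |θ| ≤ (k : ℝ) ∧
      ((S.filter (fun x => (d : ℤ) ∣ x)).card : ℝ) = (S.card : ℝ) / (d : ℝ) + θ := by
  induction hS with
  | ap a q m hq =>
    exact ⟨_, by simpa using ap_discrepancy d hd a q m hq _ rfl, by ring⟩
  | @union k₁ k₂ S₁ S₂ _ _ hdisj ih₁ ih₂ =>
    obtain ⟨θ₁, hθ₁, e₁⟩ := ih₁
    obtain ⟨θ₂, hθ₂, e₂⟩ := ih₂
    refine ⟨θ₁ + θ₂, ?_, ?_⟩
    · push_cast
      exact (abs_add_le _ _).trans (add_le_add hθ₁ hθ₂)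
    · rw [Finset.filter_union, Finset.card_union_of_disjoint hdisj,
        Finset.card_union_of_disjoint (Finset.disjoint_filter_filter hdisj)]
      push_cast
      rw [e₁, e₂]
      ring
  | @sdiff k₁ k₂ S₁ S₂ _ _ hsub ih₁ ih₂ =>
    obtain ⟨θ₁, hθ₁, e₁⟩ := ih₁
    obtain ⟨θ₂, hθ₂, e₂⟩ := ih₂
    refine ⟨θ₁ - θ₂, ?_, ?_⟩
    · push_cast
      exact (abs_sub _ _).trans (add_le_add hθ₁ hθ₂)
    · have hf : (S₁ \ S₂).filter (fun x => (d : ℤ) ∣ x)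
          = S₁.filter (fun x => (d : ℤ) ∣ x) \ S₂.filter (fun x => (d : ℤ) ∣ x) := by
        ext x
        simp only [Finset.mem_filter, Finset.mem_sdiff]
        tauto
      rw [hf, Finset.cast_card_sdiff hsub,
        Finset.cast_card_sdiff (Finset.filter_subset_filter _ hsub), e₁, e₂]
      ring
end

section
/- Let p₁ < p₂ < ⋯ < p_j be primes with p₁ = 2, set m = p₁p₂⋯p_j, and let I be an interval of L consecutive positive integers where 2^j divides L and L ≥ 4^j. Then I can be partitioned into 2^j sets A_v of size L/2^j, indexed by the divisors v of m, such that every element of A_v is coprime to v, and such that for every divisor v of m and every positive integer d coprime to m, the number of elements of A_v divisible by d differs from L/(d·2^j) by at most 2^{j−1}. -/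
/-!
The parts are produced by a labelling `f : ℕ → ℕ` of the integers by divisors of `m`, built one
prime at a time; `A v` is the fibre of `f` over `v` in the interval. For `m = 2` the labels are
`1` on even and `2` on odd numbers. To add an odd prime `p`, each part `X` is cut at a position `t`:
the elements of `X` below `t` that are not divisible by `p` have their label multiplied by `p`, the
others keep it. The position `t` is chosen so that the two pieces have the same size, which is
possible because at most half of the elements of `X` are divisible by `p`.

The divisibility counts are controlled by the invariant `Equidist m k X`: among the elements of `X`
lying in any interval and divisible by any `e` coprime to `m`, the proportion divisible by `d` is
`1 / d` up to an additive error `k` in the count. In both pieces of a cut part, the multiples of `q`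
are counted by a difference or a sum of two counts in `X`: multiples of `q` in one interval, and
multiples of `q * p` in another. So adding a prime doubles `k` (`Equidist.low`, `Equidist.high`),
whereas the parity classes satisfy the invariant with `k = 1` (`equidist_parity`).
-/

/-! ### Equidistribution of multiples and cutting -/

/-- The number of multiples of `q` among the elements of `X` in the interval `[s, t)`. -/
def cnt (X : Finset ℕ) (s t q : ℕ) : ℕ := (X.filter (fun x => s ≤ x ∧ x < t ∧ q ∣ x)).card

/-- In every interval, among the elements of `X` divisible by `e`, the number of those divisible by
`d * e` is `1 / d` of the total up to an error `k`, for all `d` and `e` coprime to `m`. -/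
def Equidist (m : ℕ) (k : ℝ) (X : Finset ℕ) : Prop :=
  ∀ s t d e : ℕ, 0 < d → Nat.Coprime d m → Nat.Coprime e m →
    |(cnt X s t (d * e) : ℝ) - (cnt X s t e : ℝ) / d| ≤ k

/-- The elements of `X` below `t` not divisible by `p`. -/
def low (X : Finset ℕ) (p t : ℕ) : Finset ℕ := X.filter (fun x => x < t ∧ ¬ p ∣ x)

/-- The elements of `X` outside `low X p t`. -/
def high (X : Finset ℕ) (p t : ℕ) : Finset ℕ := X.filter (fun x => ¬ (x < t ∧ ¬ p ∣ x))

lemma cnt_low (X : Finset ℕ) {p q : ℕ} (t s u : ℕ) (h : Nat.Coprime q p) :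
    cnt (low X p t) s u q + cnt X s (min u t) (q * p) = cnt X s (min u t) q := by
  unfold cnt low
  rw [← Finset.card_union_of_disjoint]
  · congr 1
    ext x
    have := h.mul_dvd_of_dvd_of_dvd (a := x)
    have h1 : q * p ∣ x → q ∣ x := fun h => dvd_of_mul_right_dvd h
    simp only [Finset.mem_union, Finset.mem_filter, lt_min_iff]
    tauto
  · rw [Finset.disjoint_left]
    intro x
    have h1 : q * p ∣ x → p ∣ x := fun h => dvd_of_mul_left_dvd h
    simp only [Finset.mem_filter]
    tauto

lemma cnt_high (X : Finset ℕ) {p q : ℕ} (t s u : ℕ) (h : Nat.Coprime q p) :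
    cnt (high X p t) s u q = cnt X (max s t) u q + cnt X s (min u t) (q * p) := by
  unfold cnt high
  rw [← Finset.card_union_of_disjoint]
  · congr 1
    ext x
    have := h.mul_dvd_of_dvd_of_dvd (a := x)
    have h1 : q * p ∣ x → q ∣ x := fun h => dvd_of_mul_right_dvd h
    have h2 : q * p ∣ x → p ∣ x := fun h => dvd_of_mul_left_dvd h
    have h3 := lt_or_ge x t
    have h4 := fun h : t ≤ x => not_lt.2 h
    simp only [Finset.mem_union, Finset.mem_filter, lt_min_iff, max_le_iff]
    tauto
  · rw [Finset.disjoint_left]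
    intro x
    have h4 := fun h : t ≤ x => not_lt.2 h
    simp only [Finset.mem_filter, lt_min_iff, max_le_iff]
    tauto

lemma Equidist.low {m : ℕ} {k : ℝ} {X : Finset ℕ} (h : Equidist m k X) {p : ℕ}
    (hp : Nat.Coprime p m) (t : ℕ) : Equidist (m * p) (2 * k) (low X p t) := by
  intro s u d e hd hdm hem
  rw [Nat.coprime_mul_iff_right] at hdm hem
  have e1 := cnt_low X t s u (hdm.2.mul_left hem.2)
  have e2 := cnt_low X t s u hem.2
  have h1 := h s (min u t) d e hd hdm.1 hem.1
  have h2 := h s (min u t) d (e * p) hd hdm.1 (hem.1.mul_left hp)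
  rw [← mul_assoc] at h2
  rw [abs_le] at *
  rify at e1 e2
  rw [← eq_sub_iff_add_eq] at e1 e2
  rw [e1, e2, sub_div]
  constructor <;> linarith

lemma Equidist.high {m : ℕ} {k : ℝ} {X : Finset ℕ} (h : Equidist m k X) {p : ℕ}
    (hp : Nat.Coprime p m) (t : ℕ) : Equidist (m * p) (2 * k) (high X p t) := by
  intro s u d e hd hdm hem
  rw [Nat.coprime_mul_iff_right] at hdm hem
  have e1 := cnt_high X t s u (hdm.2.mul_left hem.2)
  have e2 := cnt_high X t s u hem.2
  have h1 := h (max s t) u d e hd hdm.1 hem.1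
  have h2 := h s (min u t) d (e * p) hd hdm.1 (hem.1.mul_left hp)
  rw [← mul_assoc] at h2
  rw [abs_le] at *
  rify at e1 e2
  rw [e1, e2, add_div]
  constructor <;> linarith

/-! ### Parity classes -/

/-- Multiples of an odd `e` in a parity class form a residue class modulo `2 * e`. -/
lemma parity_dvd_iff {e r x : ℕ} (he : Nat.Coprime e 2) (hr : r < 2) :
    (x % 2 = r ∧ e ∣ x) ↔ x ≡ r * e [MOD 2 * e] := by
  have hodd : e % 2 = 1 := Nat.odd_iff.1 (Nat.coprime_two_right.1 he)
  rw [← Nat.modEq_and_modEq_iff_modEq_mul he.symm]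
  have h1 : (r * e) % 2 = r := by rw [Nat.mul_mod, hodd]; omega
  have h2 : x ≡ r * e [MOD e] ↔ e ∣ x := by
    unfold Nat.ModEq
    rw [Nat.mul_mod_left, Nat.dvd_iff_mod_eq_zero]
  rw [h2]
  unfold Nat.ModEq
  rw [h1]

lemma cnt_parity (a b s t : ℕ) {e r : ℕ} (he : Nat.Coprime e 2) (hr : r < 2) :
    (cnt ((Finset.Ico a b).filter (fun x => x % 2 = r)) s t e : ℤ) =
      max (⌈(((min b t : ℕ) : ℚ) - ((r * e : ℕ) : ℚ)) / ((2 * e : ℕ) : ℚ)⌉ -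
        ⌈(((max a s : ℕ) : ℚ) - ((r * e : ℕ) : ℚ)) / ((2 * e : ℕ) : ℚ)⌉) 0 := by
  have hodd : e % 2 = 1 := Nat.odd_iff.1 (Nat.coprime_two_right.1 he)
  rw [← Nat.Ico_filter_modEq_card _ _ (by omega : 0 < 2 * e)]
  unfold cnt
  congr 2
  ext x
  simp only [Finset.mem_filter, Finset.mem_Ico, ← parity_dvd_iff he hr, lt_min_iff, max_le_iff]
  tauto

/-- The ceilings counting a progression and its `d`-th subprogression, for odd `d = 2 * h + 1`:
the second is the first, shifted by `r * h`, divided by `d` and rounded up. -/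
lemma ceil_nested (w e d h r : ℕ) (he : 0 < e) (hd : d = 2 * h + 1) :
    let W : ℤ := ⌈((w : ℚ) - ((r * e : ℕ) : ℚ)) / ((2 * e : ℕ) : ℚ)⌉
    let V : ℤ := ⌈((w : ℚ) - ((r * (d * e) : ℕ) : ℚ)) / ((2 * (d * e) : ℕ) : ℚ)⌉
    W - r * h ≤ d * V ∧ d * V - d + 1 ≤ W - r * h := by
  intro W V
  have he' : (0 : ℚ) < e := by exact_mod_cast he
  have hd' : (0 : ℚ) < d := by rw [hd]; positivity
  have hdq : (d : ℚ) = 2 * h + 1 := by rw [hd]; push_cast; ring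
  set α : ℚ := ((w : ℚ) - ((r * e : ℕ) : ℚ)) / ((2 * e : ℕ) : ℚ) with hα
  have hβ : ((w : ℚ) - ((r * (d * e) : ℕ) : ℚ)) / ((2 * (d * e) : ℕ) : ℚ) = (α - r * h) / d := by
    rw [hα]
    push_cast
    field_simp
    rw [hdq]
    ring
  have h1 : (α - r * h) / d ≤ V := by rw [← hβ]; exact Int.le_ceil _
  have h2 : (V : ℚ) - 1 < (α - r * h) / d := by
    rw [← hβ]
    have := Int.ceil_lt_add_one
      (((w : ℚ) - ((r * (d * e) : ℕ) : ℚ)) / ((2 * (d * e) : ℕ) : ℚ))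
    simp only [V]
    linarith
  rw [div_le_iff₀ hd'] at h1
  rw [lt_div_iff₀ hd'] at h2
  constructor
  · have : W ≤ V * d + r * h := by
      change ⌈α⌉ ≤ _
      rw [Int.ceil_le]
      push_cast
      linarith
    linarith
  · have : (V - 1) * d + r * h < W := by
      change _ < ⌈α⌉
      rw [Int.lt_ceil]
      push_cast
      linarith
    linarith

lemma equidist_parity (a b : ℕ) {r : ℕ} (hr : r < 2) :
    Equidist 2 1 ((Finset.Ico a b).filter (fun x => x % 2 = r)) := by
  intro s t d e hd hd2 he2
  have he : 0 < e := (Nat.coprime_two_right.1 he2).pos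
  obtain ⟨h, hh⟩ := Nat.coprime_two_right.1 hd2
  have c1 := cnt_parity a b s t he2 hr
  have c2 := cnt_parity a b s t (hd2.mul_left he2) hr
  obtain ⟨w1, w2⟩ := ceil_nested (min b t) e d h r he hh
  obtain ⟨u1, u2⟩ := ceil_nested (max a s) e d h r he hh
  set n1 := cnt ((Finset.Ico a b).filter (fun x => x % 2 = r)) s t e
  set n2 := cnt ((Finset.Ico a b).filter (fun x => x % 2 = r)) s t (d * e)
  set W := ⌈(((min b t : ℕ) : ℚ) - ((r * e : ℕ) : ℚ)) / ((2 * e : ℕ) : ℚ)⌉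
  set U := ⌈(((max a s : ℕ) : ℚ) - ((r * e : ℕ) : ℚ)) / ((2 * e : ℕ) : ℚ)⌉
  set W' := ⌈(((min b t : ℕ) : ℚ) - ((r * (d * e) : ℕ) : ℚ)) / ((2 * (d * e) : ℕ) : ℚ)⌉
  set U' := ⌈(((max a s : ℕ) : ℚ) - ((r * (d * e) : ℕ) : ℚ)) / ((2 * (d * e) : ℕ) : ℚ)⌉
  have hdz : (0 : ℤ) < d := by exact_mod_cast hd
  have key : (d : ℤ) * n2 - n1 ≤ d ∧ -(d : ℤ) ≤ d * n2 - n1 := by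
    rw [c1, c2]
    rcases le_total (W - U) 0 with h1 | h1
    · rw [max_eq_right h1]
      rcases le_total (W' - U') 0 with h2 | h2
      · rw [max_eq_right h2]; constructor <;> linarith
      · rw [max_eq_left h2]; constructor <;> nlinarith
    · rw [max_eq_left h1]
      rcases le_total (W' - U') 0 with h2 | h2
      · rw [max_eq_right h2]; constructor <;> nlinarith
      · rw [max_eq_left h2]; constructor <;> nlinarith
  have hdr : (0 : ℝ) < d := by exact_mod_cast hd
  have k1 : (d : ℝ) * n2 - n1 ≤ d := by exact_mod_cast key.1
  have k2 : -(d : ℝ) ≤ d * n2 - n1 := by exact_mod_cast key.2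
  have : (n2 : ℝ) - n1 / d = (d * n2 - n1) / d := by field_simp
  rw [this, abs_le, le_div_iff₀ hdr, div_le_iff₀ hdr]
  constructor <;> linarith

/-! ### Cutting into halves -/

/-- `t ↦ (low X p t).card` grows in steps of at most one, so takes every intermediate value. -/
lemma exists_card_low (X : Finset ℕ) (p N : ℕ) :
    ∀ T, N ≤ (low X p T).card → ∃ t, (low X p t).card = N := by
  intro T
  induction T with
  | zero =>
    intro h
    refine ⟨0, ?_⟩
    have : (low X p 0).card = 0 := by simp [low]
    omega
  | succ T ih =>
    intro h
    by_cases h1 : N ≤ (low X p T).card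
    · exact ih h1
    · refine ⟨T + 1, ?_⟩
      have hsub : low X p (T + 1) ⊆ insert T (low X p T) := by
        intro x
        simp only [low, Finset.mem_insert, Finset.mem_filter]
        intro hx
        by_cases hxT : x = T
        · exact Or.inl hxT
        · exact Or.inr ⟨hx.1, by omega, hx.2.2⟩
      have := (Finset.card_le_card hsub).trans (Finset.card_insert_le _ _)
      omega

lemma cnt_all {X : Finset ℕ} {b : ℕ} (hX : ∀ x ∈ X, x < b) (q : ℕ) :
    cnt X 0 b q = (X.filter (fun x => q ∣ x)).card := by
  unfold cnt
  congr 1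
  apply Finset.filter_congr
  intro x hx
  simp [hX x hx]

/-- Since `Equidist` bounds the number of multiples of `p` in a sufficiently large `X`, some cut
gives `low X p t` exactly half of the elements. -/
lemma exists_half {m b N p : ℕ} {k : ℝ} {X : Finset ℕ} (h : Equidist m k X)
    (hX : ∀ x ∈ X, x < b) (hcard : X.card = 2 * N) (hp : 3 ≤ p) (hpm : Nat.Coprime p m)
    (hN : 3 * k ≤ N) : ∃ t, (low X p t).card = N := by
  apply exists_card_low X p N b
  have h1 := h 0 b p 1 (by omega) hpm (Nat.coprime_one_left m)
  rw [mul_one, cnt_all hX, cnt_all hX] at h1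
  simp only [one_dvd, Finset.filter_true, hcard] at h1
  have h2 := (abs_le.1 h1).2
  have hlow : low X p b = X.filter (fun x => ¬ p ∣ x) :=
    Finset.filter_congr fun x hx => by simp [hX x hx]
  have h3 := Finset.card_filter_add_card_filter_not (s := X) (fun x => p ∣ x)
  rw [hcard] at h3
  rw [hlow]
  have h4 : ((2 * N : ℕ) : ℝ) / p ≤ ((2 * N : ℕ) : ℝ) / 3 := by
    apply div_le_div_of_nonneg_left (by positivity) (by norm_num)
    exact_mod_cast hp
  push_cast at h4 h2
  have h5 : ((X.filter (fun x => p ∣ x)).card : ℝ) ≤ N := by linarith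
  have h6 : (X.filter (fun x => p ∣ x)).card ≤ N := by exact_mod_cast h5
  omega

/-! ### The labelling by divisors -/

/-- The part of the interval `[a, a + L)` with label `v`. -/
def fibre (a L : ℕ) (f : ℕ → ℕ) (v : ℕ) : Finset ℕ :=
  (Finset.Ico a (a + L)).filter (fun x => f x = v)

/-- The labelling, by induction on the set `T` of odd primes dividing `m = 2 * ∏ T`. -/
lemma exists_label (a L : ℕ) (T : Finset ℕ) : (∀ p ∈ T, p.Prime ∧ p ≠ 2) →
    2 ^ (T.card + 1) ∣ L → 4 ^ (T.card + 1) ≤ L →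
    ∃ f : ℕ → ℕ, (∀ x, f x ∣ 2 * ∏ p ∈ T, p) ∧ (∀ x, Nat.Coprime x (f x)) ∧
      ∀ v, v ∣ 2 * ∏ p ∈ T, p →
        (fibre a L f v).card = L / 2 ^ (T.card + 1) ∧
        Equidist (2 * ∏ p ∈ T, p) (2 ^ T.card) (fibre a L f v) := by
  induction T using Finset.induction_on with
  | empty =>
    intro _ h2 h4
    clear h4
    refine ⟨fun x => x % 2 + 1, ?_, ?_, ?_⟩
    · intro x
      rcases Nat.mod_two_eq_zero_or_one x with h | h <;> simp [h]
    · intro x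
      rcases Nat.mod_two_eq_zero_or_one x with h | h
      · simp [h]
      · simpa [h] using Nat.odd_iff.2 h
    · intro v hv
      simp only [Finset.prod_empty, mul_one, Finset.card_empty, pow_zero, zero_add, pow_one]
        at hv h2 ⊢
      obtain ⟨r, hr, rfl⟩ : ∃ r, r < 2 ∧ v = r + 1 := by
        rcases (Nat.dvd_prime Nat.prime_two).1 hv with rfl | rfl
        · exact ⟨0, by norm_num, rfl⟩
        · exact ⟨1, by norm_num, rfl⟩
      have hf : fibre a L (fun x => x % 2 + 1) (r + 1) =
          (Finset.Ico a (a + L)).filter (fun x => x % 2 = r) := by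
        unfold fibre
        apply Finset.filter_congr
        intro x _
        exact Nat.add_right_cancel_iff
      rw [hf]
      refine ⟨?_, equidist_parity _ _ hr⟩
      obtain ⟨n, rfl⟩ := h2
      clear hf hv
      rw [Nat.mul_div_cancel_left _ (by norm_num)]
      induction n with
      | zero => simp
      | succ n ih =>
        have : Finset.Ico a (a + 2 * (n + 1)) =
            insert (a + 2 * n + 1) (insert (a + 2 * n) (Finset.Ico a (a + 2 * n))) := by
          ext x
          simp only [Finset.mem_insert, Finset.mem_Ico]
          omega
        rw [this, Finset.filter_insert, Finset.filter_insert]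
        split_ifs with h1 h2 h2
        · omega
        · rw [Finset.card_insert_of_notMem (by simp), ih]
        · rw [Finset.card_insert_of_notMem (by simp), ih]
        · omega
  | insert p T hpT ih =>
    intro hT h2 h4
    rw [Finset.card_insert_of_notMem hpT] at h2 h4 ⊢
    obtain ⟨f, hdvd, hcop, hf⟩ := ih (fun q hq => hT q (Finset.mem_insert_of_mem hq))
      ((pow_dvd_pow 2 (by omega)).trans h2)
      ((Nat.pow_le_pow_right (by norm_num) (by omega)).trans h4)
    obtain ⟨hp, hp2⟩ := hT p (Finset.mem_insert_self p T)
    have hp3 : 3 ≤ p := by have := hp.two_le; omega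
    have hm : 2 * ∏ q ∈ insert p T, q = (2 * ∏ q ∈ T, q) * p := by
      rw [Finset.prod_insert hpT]; ring
    have hpm : Nat.Coprime p (2 * ∏ q ∈ T, q) := by
      apply Nat.Coprime.mul_right
      · exact (Nat.coprime_primes hp Nat.prime_two).2 hp2
      · apply Nat.Coprime.prod_right
        intro q hq
        refine (Nat.coprime_primes hp (hT q (Finset.mem_insert_of_mem hq)).1).2 ?_
        rintro rfl
        exact hpT hq
    rw [hm]
    set m := 2 * ∏ q ∈ T, q
    set k := T.card
    have hpf : ∀ v, v ∣ m → ¬ p ∣ v := fun v hv hpv =>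
      (hp.coprime_iff_not_dvd.1 hpm) (hpv.trans hv)
    obtain ⟨N, rfl⟩ := h2
    have hN : 3 * 2 ^ k ≤ N := by
      have e4 : 4 ^ (k + 1 + 1) = 2 ^ (k + 1 + 1) * (4 * 2 ^ k) := by
        rw [show (4 : ℕ) = 2 ^ 2 by norm_num, ← pow_mul, ← pow_add, ← pow_add]
        congr 1
        ring
      rw [e4] at h4
      have := Nat.le_of_mul_le_mul_left h4 (by positivity)
      omega
    have hdiv : 2 ^ (k + 1 + 1) * N / 2 ^ (k + 1) = 2 * N := by
      rw [pow_succ 2 (k + 1), mul_assoc, Nat.mul_div_cancel_left _ (by positivity)]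
    rw [hdiv] at hf
    rw [Nat.mul_div_cancel_left _ (by positivity)]
    set L := 2 ^ (k + 1 + 1) * N
    have hcut : ∀ v, ∃ t, v ∣ m → (low (fibre a L f v) p t).card = N := by
      intro v
      by_cases hv : v ∣ m
      · obtain ⟨t, ht⟩ := exists_half (b := a + L) (hf v hv).2
          (fun x hx => (Finset.mem_Ico.1 (Finset.mem_filter.1 hx).1).2) (hf v hv).1 hp3 hpm
          (by exact_mod_cast hN)
        exact ⟨t, fun _ => ht⟩
      · exact ⟨0, fun h => absurd h hv⟩
    choose t ht using hcut
    refine ⟨fun x => if x < t (f x) ∧ ¬ p ∣ x then f x * p else f x, ?_, ?_, ?_⟩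
    · intro x
      dsimp only
      split_ifs
      · exact Nat.mul_dvd_mul_right (hdvd x) p
      · exact (hdvd x).mul_right p
    · intro x
      dsimp only
      split_ifs with h
      · exact (hcop x).mul_right ((hp.coprime_iff_not_dvd.2 h.2).symm)
      · exact hcop x
    · intro v hv
      by_cases hpv : p ∣ v
      · obtain ⟨w, rfl⟩ := hpv
        rw [mul_comm p w] at hv ⊢
        have hw : w ∣ m := Nat.dvd_of_mul_dvd_mul_right hp.pos hv
        have hX : fibre a L (fun x => if x < t (f x) ∧ ¬ p ∣ x then f x * p else f x) (w * p) =
            low (fibre a L f w) p (t w) := by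
          unfold fibre low
          rw [Finset.filter_filter]
          apply Finset.filter_congr
          intro x _
          dsimp only
          split_ifs with h
          · rw [Nat.mul_left_inj hp.ne_zero]
            exact ⟨fun e => ⟨e, e ▸ h⟩, fun e => e.1⟩
          · constructor
            · intro e
              exact absurd (e ▸ Dvd.intro_left w rfl : p ∣ f x) (hpf _ (hdvd x))
            · rintro ⟨e, h'⟩
              exact absurd (e ▸ h') h
        rw [hX, pow_succ, mul_comm ((2 : ℝ) ^ k)]
        exact ⟨ht w hw, (hf w hw).2.low hpm _⟩
      · have hw : v ∣ m := ((hp.coprime_iff_not_dvd.2 hpv).symm).dvd_of_dvd_mul_right hv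
        have hX : fibre a L (fun x => if x < t (f x) ∧ ¬ p ∣ x then f x * p else f x) v =
            high (fibre a L f v) p (t v) := by
          unfold fibre high
          rw [Finset.filter_filter]
          apply Finset.filter_congr
          intro x _
          dsimp only
          split_ifs with h
          · constructor
            · intro e
              exact absurd (e ▸ Dvd.intro_left (f x) rfl) hpv
            · rintro ⟨e, h'⟩
              exact absurd (e ▸ h) h'
          · exact ⟨fun e => ⟨e, e ▸ h⟩, fun e => e.1⟩
        rw [hX, pow_succ, mul_comm ((2 : ℝ) ^ k)]
        refine ⟨?_, (hf v hw).2.high hpm _⟩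
        have e1 := ht v hw
        have e2 := (hf v hw).1
        have e3 := Finset.card_filter_add_card_filter_not (s := fibre a L f v)
          (fun x => x < t v ∧ ¬ p ∣ x)
        unfold low at e1
        unfold high
        omega


theorem stmt_6 (j : ℕ) (hj : 0 < j) (p : Fin j → ℕ)
    (hprime : ∀ i, (p i).Prime) (hmono : StrictMono p) (hp0 : p ⟨0, hj⟩ = 2)
    (L a : ℕ) (ha : 0 < a) (hLdvd : 2 ^ j ∣ L) (hL : 4 ^ j ≤ L) :
    ∃ A : ℕ → Finset ℕ,
      -- the sets `A v`, for `v` a divisor of `m = p₁⋯p_j`, partition the interval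
      ((∏ i, p i).divisors).biUnion A = Finset.Ico a (a + L) ∧
      ((((∏ i, p i).divisors) : Set ℕ)).PairwiseDisjoint A ∧
      -- each part has size `L / 2^j`
      (∀ v ∈ (∏ i, p i).divisors, (A v).card = L / 2 ^ j) ∧
      -- every element of `A v` is coprime to `v`
      (∀ v ∈ (∏ i, p i).divisors, ∀ x ∈ A v, Nat.Coprime x v) ∧
      -- divisibility counts: for `d` coprime to `m`, the number of elements of `A v`
      -- divisible by `d` differs from `L/(d·2^j)` by at most `2^{j-1}`
      (∀ v ∈ (∏ i, p i).divisors, ∀ d : ℕ, 0 < d → Nat.Coprime d (∏ i, p i) →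
        |(((A v).filter (fun x => d ∣ x)).card : ℝ) - (L : ℝ) / ((d : ℝ) * 2 ^ j)|
          ≤ 2 ^ (j - 1)) := by
  classical
  set z : Fin j := ⟨0, hj⟩
  set T := (Finset.univ.erase z).image p with hTdef
  have hcardT : T.card + 1 = j := by
    rw [hTdef, Finset.card_image_of_injective _ hmono.injective,
      Finset.card_erase_add_one (Finset.mem_univ z), Finset.card_univ, Fintype.card_fin]
  have hm : 2 * ∏ q ∈ T, q = ∏ i, p i := by
    rw [hTdef, Finset.prod_image (fun x _ y _ h => hmono.injective h), ← hp0,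
      Finset.mul_prod_erase _ _ (Finset.mem_univ z)]
  have hT : ∀ q ∈ T, q.Prime ∧ q ≠ 2 := by
    intro q hq
    obtain ⟨i, hi, rfl⟩ := Finset.mem_image.1 hq
    refine ⟨hprime i, fun h => (Finset.mem_erase.1 hi).1 ?_⟩
    exact hmono.injective (h.trans hp0.symm)
  have hm0 : ∏ i, p i ≠ 0 := Finset.prod_ne_zero_iff.2 fun i _ => (hprime i).ne_zero
  obtain ⟨f, hdvd, hcop, hf⟩ := exists_label a L T hT (by rwa [hcardT]) (by rwa [hcardT])
  rw [hm, hcardT, show T.card = j - 1 by omega] at hf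
  rw [hm] at hdvd
  refine ⟨fibre a L f, ?_, ?_, ?_, ?_, ?_⟩
  · ext x
    simp only [Finset.mem_biUnion, fibre, Finset.mem_filter, Nat.mem_divisors]
    exact ⟨fun ⟨_, _, h, _⟩ => h, fun h => ⟨f x, ⟨hdvd x, hm0⟩, h, rfl⟩⟩
  · intro v _ w _ hvw
    rw [Function.onFun, Finset.disjoint_left]
    intro x hx hx'
    exact hvw ((Finset.mem_filter.1 hx).2.symm.trans (Finset.mem_filter.1 hx').2)
  · intro v hv
    exact (hf v (Nat.dvd_of_mem_divisors hv)).1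
  · intro v _ x hx
    rw [← (Finset.mem_filter.1 hx).2]
    exact hcop x
  · intro v hv d hd hdm
    obtain ⟨h1, h2⟩ := hf v (Nat.dvd_of_mem_divisors hv)
    have hX : ∀ x ∈ fibre a L f v, x < a + L :=
      fun x hx => (Finset.mem_Ico.1 (Finset.mem_filter.1 hx).1).2
    have h3 := h2 0 (a + L) d 1 hd hdm (Nat.coprime_one_left _)
    rw [mul_one, cnt_all hX, cnt_all hX] at h3
    simp only [one_dvd, Finset.filter_true, h1] at h3
    rw [Nat.cast_div hLdvd (by positivity), div_div, mul_comm _ (d : ℝ)] at h3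
    push_cast at h3
    exact h3
end
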